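/- For 1 ≤ r ≤ x/4, ∑_{p ≤ √(x/r)} π(rp) = ∫₂^{√(x/r)} Li(ru)/(log u) du + O((x/log x)·exp(−c·√(log(x/r)))), where the sum is over primes, for some absolute constant c > 0. -/

import Mathlib

open scoped Classical

/-- The prime counting function with real argument. -/
noncomputable def primePi (y : ℝ) : ℕ := {p : ℕ | p.Prime ∧ (p : ℝ) ≤ y}.ncard

/-- The logarithmic integral `Li y = ∫₂^y du / log u`. -/
noncomputable def Li (y : ℝ) : ℝ := ∫ u in (2 : ℝ)..y, 1 / Real.log u

/-!
Landau's lemma (Borel–Carathéodory applied to `ζ'/ζ` with the nearby zeros divided out) and the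
inequality `3 + 4 cos θ + cos 2θ ≥ 0` give the zero-free region `Re s ≥ 1 - c / log |t|` together
with a polylogarithmic bound for `ζ'/ζ` there. Shifting a Perron integral with Cesàro weight, which
converges absolutely, into this region shows that `∫₀ˣ (ψ(t) - t) dt` is
`O(x² exp (-c √(log x)))`. As `ψ` is monotone, this can be differenced to give
`ψ(x) = x + O(x exp (-c √(log x)))`, hence the same error term in `π(x) = Li(x) + R₁(x)`.

For the sum over `p ≤ y = √(x / r)`, every `rp` is at most `ry`, so replacing `π(rp)` by `Li(rp)`
costs at most `y` times the error at `ry ≥ √x`. What remains is summed by parts against `π`, and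
only `sup_{u ≤ y} |R₁(u)| · Li(ry)` is lost because `u ↦ Li(ru)` is increasing.
-/

section LandauLemma

open Complex Metric ComplexConjugate

theorem exists_eqOn_exp_mul_of_ne_zero {h : ℂ → ℂ} {r : ℝ} (hr : 0 < r)
    (hd : DifferentiableOn ℂ h (ball 0 r)) (hne : ∀ z ∈ ball (0 : ℂ) r, h z ≠ 0) :
    ∃ G : ℂ → ℂ, (∀ z ∈ ball (0 : ℂ) r, HasDerivAt G (logDeriv h z) z) ∧ G 0 = 0 ∧
      ∀ z ∈ ball (0 : ℂ) r, h z = exp (G z) * h 0 := by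
  obtain ⟨F, hF⟩ := ((hd.deriv isOpen_ball).div hd hne).isExactOn_ball
  have hG : ∀ z ∈ ball (0 : ℂ) r, HasDerivAt (fun z ↦ F z - F 0) (logDeriv h z) z :=
    fun z hz ↦ (hF z hz).sub_const _
  have h0 : (0 : ℂ) ∈ ball (0 : ℂ) r := mem_ball_self hr
  refine ⟨fun z ↦ F z - F 0, hG, sub_self _, ?_⟩
  have hlog : Set.EqOn (logDeriv h) (logDeriv fun z ↦ exp (F z - F 0)) (ball 0 r) := fun z hz ↦ by
    rw [logDeriv_apply (fun z ↦ exp (F z - F 0)), (hG z hz).cexp.deriv,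
      mul_div_cancel_left₀ _ (exp_ne_zero _)]
  obtain ⟨a, -, ha⟩ := (logDeriv_eqOn_iff hd
    (fun z hz ↦ (hG z hz).cexp.differentiableAt.differentiableWithinAt) isOpen_ball
    (convex_ball 0 r).isPreconnected (fun _ _ ↦ exp_ne_zero _) hne).mp hlog
  intro z hz
  have ha0 : h 0 = a := by simpa using ha h0
  simpa [ha0, mul_comm] using ha hz

theorem norm_deriv_le_of_re_le {G : ℂ → ℂ} {r M : ℝ} (hr : 0 < r) (hM : 0 < M)
    (hd : DifferentiableOn ℂ G (ball 0 r)) (hre : ∀ z ∈ ball (0 : ℂ) r, (G z).re ≤ M)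
    (hG0 : G 0 = 0) {z : ℂ} (hz : ‖z‖ ≤ r / 2) : ‖deriv G z‖ ≤ 24 * M / r := by
  have hsub : closedBall z (r / 4) ⊆ closedBall (0 : ℂ) (3 * r / 4) :=
    closedBall_subset_closedBall' (by rw [dist_zero_right]; linarith)
  have hsub' : closedBall (0 : ℂ) (3 * r / 4) ⊆ ball 0 r := closedBall_subset_ball (by linarith)
  have hbound : ∀ w ∈ sphere z (r / 4), ‖G w‖ ≤ 6 * M := by
    intro w hw
    have hw' := hsub (sphere_subset_closedBall hw)
    have hwr : ‖w‖ ≤ 3 * r / 4 := mem_closedBall_zero_iff.mp hw'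
    refine (borelCaratheodory_zero hM hd hre hr (hsub' hw') hG0).trans ?_
    rw [div_le_iff₀ (by linarith)]
    nlinarith [mul_le_mul_of_nonneg_left hwr hM.le]
  have hcl : DiffContOnCl ℂ G (ball z (r / 4)) := by
    apply DifferentiableOn.diffContOnCl
    rw [closure_ball _ (by linarith : r / 4 ≠ 0)]
    exact hd.mono (hsub.trans hsub')
  refine (norm_deriv_le_of_forall_mem_sphere_norm_le (by linarith) hcl hbound).trans_eq ?_
  field_simp
  norm_num

theorem norm_logDeriv_le_of_norm_le_exp_mul {h : ℂ → ℂ} {r M : ℝ} (hr : 0 < r) (hM : 0 < M)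
    (hd : DifferentiableOn ℂ h (ball 0 r)) (hne : ∀ z ∈ ball (0 : ℂ) r, h z ≠ 0)
    (hb : ∀ z ∈ ball (0 : ℂ) r, ‖h z‖ ≤ Real.exp M * ‖h 0‖) {z : ℂ} (hz : ‖z‖ ≤ r / 2) :
    ‖logDeriv h z‖ ≤ 24 * M / r := by
  obtain ⟨G, hG, hG0, hexp⟩ := exists_eqOn_exp_mul_of_ne_zero hr hd hne
  have hre : ∀ w ∈ ball (0 : ℂ) r, (G w).re ≤ M := fun w hw ↦ by
    have hw' := hb w hw
    rw [hexp w hw, norm_mul, norm_exp] at hw'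
    have h0 : 0 < ‖h 0‖ := norm_pos_iff.mpr (hne 0 (mem_ball_self hr))
    exact Real.exp_le_exp.mp (le_of_mul_le_mul_right hw' h0)
  have hzr : z ∈ ball (0 : ℂ) r := by rw [mem_ball_zero_iff]; linarith
  rw [← (hG z hzr).deriv]
  exact norm_deriv_le_of_re_le hr hM
    (fun w hw ↦ (hG w hw).differentiableAt.differentiableWithinAt) hre hG0 hz

/-- The function obtained from `f` by dividing out a zero at `ρ` in such a way that the modulus on
the circle `‖z‖ = R` does not change: away from `ρ` it is `f` times the Blaschke-type factor
`Complex.canonicalFactor R ρ`, and `dslope` supplies the value at `ρ` itself. -/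
noncomputable def blaschkeQuotient (f : ℂ → ℂ) (R : ℝ) (ρ z : ℂ) : ℂ :=
  dslope f ρ z * ((R ^ 2 - conj ρ * z) / R)

variable {f : ℂ → ℂ} {R : ℝ} {ρ : ℂ}

theorem blaschkeQuotient_of_ne (hfρ : f ρ = 0) {z : ℂ} (hz : z ≠ ρ) :
    blaschkeQuotient f R ρ z = f z * canonicalFactor R ρ z := by
  rw [blaschkeQuotient, dslope_of_ne _ hz, slope_def_field, hfρ, canonicalFactor_apply,
    sub_zero, div_mul_div_comm, mul_comm (R : ℂ), mul_div_assoc]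

theorem diffContOnCl_blaschkeQuotient (hd : DiffContOnCl ℂ f (ball 0 R)) (hρ : ρ ∈ ball 0 R) :
    DiffContOnCl ℂ (blaschkeQuotient f R ρ) (ball 0 R) := by
  have hslope : DiffContOnCl ℂ (dslope f ρ) (ball 0 R) :=
    ⟨(differentiableOn_dslope (isOpen_ball.mem_nhds hρ)).mpr hd.differentiableOn,
      (continuousOn_dslope (Filter.mem_of_superset (isOpen_ball.mem_nhds hρ) subset_closure)).mpr
        ⟨hd.continuousOn, hd.differentiableAt isOpen_ball hρ⟩⟩
  exact hslope.smul (Differentiable.diffContOnCl (by fun_prop))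

theorem norm_blaschkeQuotient_le {B : ℝ} (hd : DiffContOnCl ℂ f (ball 0 R))
    (hb : ∀ z ∈ closedBall (0 : ℂ) R, ‖f z‖ ≤ B) (hρ : ρ ∈ ball 0 R) (hfρ : f ρ = 0) :
    ∀ z ∈ closedBall (0 : ℂ) R, ‖blaschkeQuotient f R ρ z‖ ≤ B := by
  have hR : 0 < R := (norm_nonneg ρ).trans_lt (mem_ball_zero_iff.mp hρ)
  intro z hz
  refine norm_le_of_forall_mem_frontier_norm_le isBounded_ball
    (diffContOnCl_blaschkeQuotient hd hρ) (fun w hw ↦ ?_) (by rwa [closure_ball _ hR.ne'])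
  rw [frontier_ball _ hR.ne'] at hw
  have hwρ : w ≠ ρ := fun h ↦ (mem_ball.mp hρ).ne (h ▸ mem_sphere.mp hw)
  rw [blaschkeQuotient_of_ne hfρ hwρ, norm_mul, norm_canonicalFactor_eval_circle_eq_one hρ hw,
    mul_one]
  exact hb w (sphere_subset_closedBall hw)

theorem norm_blaschkeQuotient_zero (hR : 0 < R) (hfρ : f ρ = 0) (hρ0 : ρ ≠ 0) :
    ‖blaschkeQuotient f R ρ 0‖ = R / ‖ρ‖ * ‖f 0‖ := by
  have hρn : ‖ρ‖ ≠ 0 := norm_ne_zero_iff.mpr hρ0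
  rw [blaschkeQuotient_of_ne hfρ hρ0.symm, canonicalFactor_apply]
  simp only [mul_zero, sub_zero, zero_sub, norm_mul, norm_div, norm_pow, norm_neg, norm_real,
    Real.norm_eq_abs, abs_of_pos hR]
  field_simp

theorem eq_zero_of_blaschkeQuotient_eq_zero (hρ : ρ ∈ ball 0 R) (hfρ : f ρ = 0) {z : ℂ}
    (hz : z ∈ closedBall 0 R) (h : blaschkeQuotient f R ρ z = 0) : f z = 0 := by
  obtain rfl | hzρ := eq_or_ne z ρ
  · exact hfρ
  · rw [blaschkeQuotient_of_ne hfρ hzρ] at h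
    exact (mul_eq_zero.mp h).resolve_right (canonicalFactor_ne_zero hρ hz hzρ)

theorem logDeriv_canonicalFactor_zero (hR : R ≠ 0) (hρ0 : ρ ≠ 0) :
    logDeriv (canonicalFactor R ρ) 0 = 1 / ρ - conj ρ / R ^ 2 := by
  have hRc : (R : ℂ) ≠ 0 := ofReal_ne_zero.mpr hR
  have hnum : HasDerivAt (fun z : ℂ ↦ (R : ℂ) ^ 2 - conj ρ * z) (-conj ρ) 0 := by
    simpa using ((hasDerivAt_id (0 : ℂ)).const_mul (conj ρ)).const_sub ((R : ℂ) ^ 2)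
  have hden : HasDerivAt (fun z : ℂ ↦ (R : ℂ) * (z - ρ)) R 0 := by
    simpa using ((hasDerivAt_id (0 : ℂ)).sub_const ρ).const_mul (R : ℂ)
  rw [canonicalFactor_def, logDeriv_div 0 (by simpa using hRc) (by simp [hRc, hρ0])
    hnum.differentiableAt hden.differentiableAt, logDeriv_apply, logDeriv_apply, hnum.deriv,
    hden.deriv]
  simp only [mul_zero, sub_zero, zero_sub]
  field_simp
  ring

theorem logDeriv_blaschkeQuotient_zero (hd : DiffContOnCl ℂ f (ball 0 R)) (hρ : ρ ∈ ball 0 R)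
    (hfρ : f ρ = 0) (hf0 : f 0 ≠ 0) :
    logDeriv (blaschkeQuotient f R ρ) 0 = logDeriv f 0 + (1 / ρ - conj ρ / R ^ 2) := by
  have hR : 0 < R := (norm_nonneg ρ).trans_lt (mem_ball_zero_iff.mp hρ)
  have hρ0 : ρ ≠ 0 := fun h ↦ hf0 (h ▸ hfρ)
  have h0 : (0 : ℂ) ∈ ball (0 : ℂ) R := mem_ball_self hR
  have heq : blaschkeQuotient f R ρ =ᶠ[nhds 0] fun z ↦ f z * canonicalFactor R ρ z :=
    (isOpen_ne.eventually_mem hρ0.symm).mono fun z hz ↦ blaschkeQuotient_of_ne hfρ hz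
  rw [(logDeriv_congr_nhds heq).self_of_nhds, logDeriv_mul 0 hf0
    (canonicalFactor_ne_zero hρ (ball_subset_closedBall h0) hρ0.symm)
    (hd.differentiableAt isOpen_ball h0)
    (analyticOnNhd_canonicalFactor R ρ 0 hρ0.symm).differentiableAt,
    logDeriv_canonicalFactor_zero hR.ne' hρ0]

theorem re_one_div_sub_conj_div_sq (ρ : ℂ) (R : ℝ) :
    (1 / ρ - conj ρ / R ^ 2).re = ρ.re * (1 / ‖ρ‖ ^ 2 - 1 / R ^ 2) := by
  rw [sub_re, one_div, inv_re, normSq_eq_norm_sq, ← ofReal_pow, div_ofReal_re, conj_re]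
  ring

variable {M : ℝ}

-- Each zero in the smaller disk is divided out; this at least doubles `‖f 0‖` and, the zero being
-- in the left half-plane, only decreases the real part of the logarithmic derivative.
theorem neg_le_re_logDeriv_zero_of_lt_two_pow (hR : 0 < R) (hM : 0 < M) (n : ℕ) {B : ℝ}
    (hd : DiffContOnCl ℂ f (ball 0 R)) (hb : ∀ z ∈ closedBall (0 : ℂ) R, ‖f z‖ ≤ B)
    (hBM : B ≤ Real.exp M * ‖f 0‖) (hBn : B < 2 ^ n * ‖f 0‖)
    (hzero : ∀ z ∈ closedBall (0 : ℂ) R, f z = 0 → z.re ≤ 0) :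
    -(48 * M / R) ≤ (logDeriv f 0).re := by
  induction n generalizing f with
  | zero =>
    have := hb 0 (mem_closedBall_self hR.le)
    linarith [pow_zero (2 : ℝ)]
  | succ n ih =>
    have hf0 : f 0 ≠ 0 := by
      intro h
      have := hb 0 (mem_closedBall_self hR.le)
      simp only [h, norm_zero, mul_zero] at this hBn
      linarith
    by_cases! hex : ∃ ρ ∈ ball (0 : ℂ) (R / 2), f ρ = 0
    · obtain ⟨ρ, hρ2, hfρ⟩ := hex
      have hρ : ρ ∈ ball 0 R := ball_subset_ball (by linarith) hρ2
      have hρ0 : ρ ≠ 0 := fun h ↦ hf0 (h ▸ hfρ)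
      have hρn : 0 < ‖ρ‖ := norm_pos_iff.mpr hρ0
      have hρR : ‖ρ‖ < R / 2 := mem_ball_zero_iff.mp hρ2
      have hdouble : 2 * ‖f 0‖ ≤ ‖blaschkeQuotient f R ρ 0‖ := by
        rw [norm_blaschkeQuotient_zero hR hfρ hρ0]
        gcongr
        rw [le_div_iff₀ hρn]
        linarith
      have hind := ih (diffContOnCl_blaschkeQuotient hd hρ) (norm_blaschkeQuotient_le hd hb hρ hfρ)
        (hBM.trans (by gcongr; linarith [norm_nonneg (f 0)]))
        (hBn.trans_le (by rw [pow_succ, mul_assoc]; gcongr))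
        (fun z hz h ↦ hzero z hz (eq_zero_of_blaschkeQuotient_eq_zero hρ hfρ hz h))
      rw [logDeriv_blaschkeQuotient_zero hd hρ hfρ hf0, add_re, re_one_div_sub_conj_div_sq] at hind
      have hgain : 0 ≤ 1 / ‖ρ‖ ^ 2 - 1 / R ^ 2 :=
        sub_nonneg.mpr (one_div_le_one_div_of_le (by positivity) (by gcongr; linarith))
      nlinarith [mul_nonneg_of_nonpos_of_nonpos (hzero ρ (ball_subset_closedBall hρ) hfρ)
        (neg_nonpos.mpr hgain)]
    · have hbound := norm_logDeriv_le_of_norm_le_exp_mul (half_pos hR) hM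
        (hd.differentiableOn.mono (ball_subset_ball (by linarith))) hex
        (fun z hz ↦ (hb z (ball_subset_closedBall (ball_subset_ball (by linarith) hz))).trans hBM)
        (z := 0) (by rw [norm_zero]; positivity)
      have := (abs_le.mp ((abs_re_le_norm _).trans hbound)).1
      rwa [show 24 * M / (R / 2) = 48 * M / R by field_simp; norm_num] at this

theorem neg_le_re_logDeriv_zero (hR : 0 < R) (hM : 0 < M) (hd : DiffContOnCl ℂ f (ball 0 R))
    (hb : ∀ z ∈ closedBall (0 : ℂ) R, ‖f z‖ ≤ Real.exp M * ‖f 0‖) (hf0 : f 0 ≠ 0)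
    (hzero : ∀ z ∈ closedBall (0 : ℂ) R, f z = 0 → z.re ≤ 0) :
    -(48 * M / R) ≤ (logDeriv f 0).re := by
  have : 0 < ‖f 0‖ := norm_pos_iff.mpr hf0
  obtain ⟨n, hn⟩ := pow_unbounded_of_one_lt (Real.exp M) one_lt_two
  exact neg_le_re_logDeriv_zero_of_lt_two_pow hR hM n hd hb le_rfl (by gcongr) hzero

theorem one_div_sub_le_re_logDeriv_zero (hR : 0 < R) (hM : 0 < M)
    (hd : DiffContOnCl ℂ f (ball 0 R))
    (hb : ∀ z ∈ closedBall (0 : ℂ) R, ‖f z‖ ≤ Real.exp M * ‖f 0‖) (hf0 : f 0 ≠ 0)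
    (hzero : ∀ z ∈ closedBall (0 : ℂ) R, f z = 0 → z.re ≤ 0) {b : ℝ} (hb0 : 0 < b) (hbR : b < R)
    (hfb : f (-(b : ℂ)) = 0) :
    1 / b - 1 / R - 48 * M / R ≤ (logDeriv f 0).re := by
  have hnorm : ‖-(b : ℂ)‖ = b := by rw [norm_neg, norm_real, Real.norm_of_nonneg hb0.le]
  have hρ0 : -(b : ℂ) ≠ 0 := neg_ne_zero.mpr (ofReal_ne_zero.mpr hb0.ne')
  have hρ : -(b : ℂ) ∈ ball 0 R := by rwa [mem_ball_zero_iff, hnorm]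
  have hle : ‖f 0‖ ≤ ‖blaschkeQuotient f R (-b) 0‖ := by
    rw [norm_blaschkeQuotient_zero hR hfb hρ0, hnorm]
    exact le_mul_of_one_le_left (norm_nonneg _) ((one_le_div hb0).mpr hbR.le)
  have hquot := neg_le_re_logDeriv_zero hR hM (diffContOnCl_blaschkeQuotient hd hρ)
    (fun z hz ↦ (norm_blaschkeQuotient_le hd hb hρ hfb z hz).trans (by gcongr))
    (norm_pos_iff.mp ((norm_pos_iff.mpr hf0).trans_le hle))
    (fun z hz h ↦ hzero z hz (eq_zero_of_blaschkeQuotient_eq_zero hρ hfb hz h))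
  rw [logDeriv_blaschkeQuotient_zero hd hρ hfb hf0, add_re, re_one_div_sub_conj_div_sq, hnorm,
    neg_re, ofReal_re] at hquot
  have hgain : b * (1 / b ^ 2 - 1 / R ^ 2) = 1 / b - b / R / R := by field_simp
  have hbR' : b / R / R ≤ 1 / R := by gcongr; exact (div_le_one hR).mpr hbR.le
  linarith

end LandauLemma

section ZetaBounds

open MeasureTheory Set Filter Topology Asymptotics

/-- The integral `∫₁^∞ {t} t^(-s-1) dt` which, for `0 < Re s`, carries the non-elementary part of
the Riemann zeta function. -/
noncomputable def zetaFractIntegral (s : ℂ) : ℂ :=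
  ∫ t in Ioi (1 : ℝ), ((Int.fract t : ℝ) : ℂ) * (t : ℂ) ^ (-(s + 1))

theorem norm_ofReal_fract_le_one (t : ℝ) : ‖((Int.fract t : ℝ) : ℂ)‖ ≤ 1 := by
  rw [Complex.norm_real, Real.norm_of_nonneg (Int.fract_nonneg t)]
  exact (Int.fract_lt_one t).le

theorem zetaFractIntegral_eq_mellin (s : ℂ) :
    zetaFractIntegral s = mellin ((Ioi 1).indicator fun t : ℝ ↦ ((Int.fract t : ℝ) : ℂ)) (-s) := by
  rw [zetaFractIntegral, mellin, ← integral_indicator measurableSet_Ioi,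
    ← integral_indicator measurableSet_Ioi]
  congr 1 with t
  by_cases ht : 1 < t
  · have ht0 : 0 < t := one_pos.trans ht
    simp only [indicator, mem_Ioi, ht, ht0, if_true, smul_eq_mul]
    rw [mul_comm, neg_add, sub_eq_add_neg]
  · simp [indicator, ht]

theorem differentiableAt_zetaFractIntegral {s : ℂ} (hs : 0 < s.re) :
    DifferentiableAt ℂ zetaFractIntegral s := by
  set h : ℝ → ℂ := (Ioi 1).indicator fun t : ℝ ↦ ((Int.fract t : ℝ) : ℂ)
  have hbound : ∀ t, ‖h t‖ ≤ 1 := fun t ↦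
    (norm_indicator_le_norm_self _ _).trans (norm_ofReal_fract_le_one t)
  have hmeas : Measurable h :=
    (Complex.measurable_ofReal.comp measurable_fract).indicator measurableSet_Ioi
  have hloc : LocallyIntegrable h := fun x ↦
    ⟨Ioo (x - 1) (x + 1), Ioo_mem_nhds (by linarith) (by linarith),
      Measure.integrableOn_of_bounded (M := 1) (by simp) hmeas.aestronglyMeasurable
        (Eventually.of_forall hbound)⟩
  have htop : h =O[atTop] fun t : ℝ ↦ t ^ (-(0 : ℝ)) :=
    IsBigO.of_bound 1 (Eventually.of_forall fun t ↦ by simpa using hbound t)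
  have hbot : h =O[𝓝[>] 0] fun t : ℝ ↦ t ^ (-(-s.re - 1)) := by
    refine EventuallyEq.trans_isBigO ?_ (isBigO_zero _ _)
    filter_upwards [mem_nhdsWithin_of_mem_nhds (Iio_mem_nhds one_pos)] with t ht
    exact indicator_of_notMem (notMem_Ioi.mpr (mem_Iio.mp ht).le) _
  have hd : DifferentiableAt ℂ (mellin h) (-s) :=
    mellin_differentiableAt_of_isBigO_rpow (hloc.locallyIntegrableOn _) htop (by simpa using hs)
      hbot (by simp)
  rw [funext zetaFractIntegral_eq_mellin]
  exact hd.comp s differentiableAt_id.neg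

theorem norm_zetaFractIntegral_le {s : ℂ} (hs : 0 < s.re) : ‖zetaFractIntegral s‖ ≤ 1 / s.re := by
  have hint : ∫ t in Ioi (1 : ℝ), t ^ (-(s.re + 1)) = 1 / s.re := by
    rw [integral_Ioi_rpow_of_lt (by linarith) one_pos]
    simp
  rw [← hint]
  refine norm_integral_le_of_norm_le (integrableOn_Ioi_rpow_of_lt (by linarith) one_pos) ?_
  filter_upwards [ae_restrict_mem measurableSet_Ioi] with t ht
  rw [norm_mul, Complex.norm_cpow_eq_rpow_re_of_pos (one_pos.trans ht)]
  simpa using mul_le_mul_of_nonneg_right (norm_ofReal_fract_le_one t)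
    (Real.rpow_nonneg (one_pos.trans ht).le (-(s.re + 1)))

theorem integral_floor_mul_cpow {s : ℂ} (hs : 1 < s.re) :
    ∫ t in Ioi (1 : ℝ), (⌊t⌋₊ : ℂ) * (t : ℂ) ^ (-(s + 1)) =
      1 / (s - 1) - zetaFractIntegral s := by
  have : s - 1 ≠ 0 := sub_ne_zero.mpr fun h ↦ by simp [h] at hs
  have hpow : ∫ t in Ioi (1 : ℝ), (t : ℂ) ^ (-s) = 1 / (s - 1) := by
    rw [integral_Ioi_cpow_of_lt (by simpa using hs) one_pos, Complex.ofReal_one, Complex.one_cpow,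
      show -s + 1 = -(s - 1) by ring, neg_div_neg_eq]
  have hipow : IntegrableOn (fun t : ℝ ↦ (t : ℂ) ^ (-s)) (Ioi 1) :=
    integrableOn_Ioi_cpow_of_lt (by simpa using hs) one_pos
  have hifract : IntegrableOn
      (fun t : ℝ ↦ ((Int.fract t : ℝ) : ℂ) * (t : ℂ) ^ (-(s + 1))) (Ioi 1) :=
    (integrableOn_Ioi_cpow_of_lt (by simpa using by linarith) one_pos).bdd_mul (c := 1)
      (Complex.measurable_ofReal.comp measurable_fract).aestronglyMeasurable
      (Eventually.of_forall norm_ofReal_fract_le_one)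
  rw [← hpow, zetaFractIntegral, ← integral_sub hipow hifract]
  refine setIntegral_congr_fun measurableSet_Ioi fun t ht ↦ ?_
  have ht0 : (0 : ℝ) < t := one_pos.trans ht
  have hfloor : (⌊t⌋₊ : ℂ) = t - (Int.fract t : ℝ) := by
    rw [← Complex.ofReal_sub, Int.self_sub_fract, ← natCast_floor_eq_intCast_floor ht0.le,
      Complex.ofReal_natCast]
  have hcpow : (t : ℂ) ^ (-s) = t * (t : ℂ) ^ (-(s + 1)) := by
    rw [show -s = 1 + -(s + 1) by ring, Complex.cpow_add _ _ (Complex.ofReal_ne_zero.mpr ht0.ne'),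
      Complex.cpow_one]
  simp only [hfloor, hcpow, sub_mul]

theorem riemannZeta₀_eq_of_one_lt_re {s : ℂ} (hs : 1 < s.re) :
    riemannZeta₀ s = 1 - s * zetaFractIntegral s := by
  have hs1 : s ≠ 1 := fun h ↦ by simp [h] at hs
  have hs1' : s - 1 ≠ 0 := sub_ne_zero.mpr hs1
  have hO : (fun n : ℕ ↦ ∑ _ ∈ Finset.Icc 1 n, (1 : ℝ)) =O[atTop] fun n ↦ (n : ℝ) ^ (1 : ℝ) :=
    IsBigO.of_bound 1 (Eventually.of_forall fun n ↦ by simp)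
  have hL := LSeries_eq_mul_integral_of_nonneg (fun _ ↦ (1 : ℝ)) zero_le_one hs hO
    fun _ ↦ zero_le_one
  have hone : LSeries (fun _ ↦ ((1 : ℝ) : ℂ)) s = riemannZeta s := by
    rw [← LSeries_one_eq_riemannZeta hs, Complex.ofReal_one, Pi.one_def]
  rw [hone] at hL
  simp only [Complex.ofReal_one, Finset.sum_const, Nat.card_Icc, add_tsub_cancel_right,
    nsmul_eq_mul, mul_one, integral_floor_mul_cpow hs] at hL
  rw [riemannZeta₀, if_neg hs1, hL]
  field_simp
  ring

theorem riemannZeta₀_eq_one_sub_mul_zetaFractIntegral {s : ℂ} (hs : 0 < s.re) :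
    riemannZeta₀ s = 1 - s * zetaFractIntegral s := by
  have hopen (a : ℝ) : IsOpen {s : ℂ | a < s.re} := isOpen_lt continuous_const Complex.continuous_re
  have hζ : AnalyticOnNhd ℂ riemannZeta₀ {s : ℂ | 0 < s.re} :=
    differentiable_riemannZeta₀.differentiableOn.analyticOnNhd (hopen 0)
  have hI : AnalyticOnNhd ℂ (fun s ↦ 1 - s * zetaFractIntegral s) {s : ℂ | 0 < s.re} :=
    DifferentiableOn.analyticOnNhd (fun s hs ↦ ((differentiableAt_id.mul
      (differentiableAt_zetaFractIntegral hs)).const_sub 1).differentiableWithinAt) (hopen 0)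
  refine hζ.eqOn_of_preconnected_of_eventuallyEq hI (convex_halfSpace_re_gt 0).isPreconnected
    (z₀ := 2) (by simp) ?_ hs
  filter_upwards [(hopen 1).mem_nhds (show (2 : ℂ) ∈ {s : ℂ | 1 < s.re} by simp)] with z hz
  exact riemannZeta₀_eq_of_one_lt_re hz

theorem norm_riemannZeta₀_le {s : ℂ} (hs : 1 / 2 ≤ s.re) : ‖riemannZeta₀ s‖ ≤ 1 + 2 * ‖s‖ := by
  have hI : ‖zetaFractIntegral s‖ ≤ 2 :=
    (norm_zetaFractIntegral_le (by linarith)).trans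
      (by rw [div_le_iff₀ (by linarith)]; linarith)
  rw [riemannZeta₀_eq_one_sub_mul_zetaFractIntegral (by linarith)]
  calc ‖1 - s * zetaFractIntegral s‖ ≤ ‖(1 : ℂ)‖ + ‖s‖ * ‖zetaFractIntegral s‖ := by
        rw [← norm_mul]; exact norm_sub_le _ _
    _ ≤ 1 + 2 * ‖s‖ := by
        rw [norm_one, mul_comm]; gcongr

theorem norm_riemannZeta₁_le {s : ℂ} (hs : 1 / 2 ≤ s.re) :
    ‖riemannZeta₁ s‖ ≤ 2 * (1 + ‖s‖) ^ 2 := by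
  have hsub : ‖s - 1‖ ≤ ‖s‖ + 1 := by simpa using norm_sub_le s 1
  calc ‖riemannZeta₁ s‖ ≤ ‖(1 : ℂ)‖ + ‖s - 1‖ * ‖riemannZeta₀ s‖ := by
        rw [riemannZeta₁, ← norm_mul]; exact norm_add_le _ _
    _ ≤ 1 + (‖s‖ + 1) * (1 + 2 * ‖s‖) := by
        rw [norm_one]; gcongr; exact norm_riemannZeta₀_le hs
    _ ≤ 2 * (1 + ‖s‖) ^ 2 := by nlinarith [norm_nonneg s]

theorem riemannZeta₁_ne_zero_of_one_le_re {s : ℂ} (hs : 1 ≤ s.re) : riemannZeta₁ s ≠ 0 := by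
  obtain rfl | h1 := eq_or_ne s 1
  · simp
  · have hζ := riemannZeta_ne_zero_of_one_le_re hs
    rw [riemannZeta_eq_inv_sub_mul h1] at hζ
    exact right_ne_zero_of_mul hζ

open scoped LSeries.notation ArithmeticFunction.vonMangoldt ArithmeticFunction.Moebius

theorem logDeriv_riemannZeta {s : ℂ} (hs : s ≠ 1) (hζ : riemannZeta₁ s ≠ 0) :
    logDeriv riemannZeta s = logDeriv riemannZeta₁ s - 1 / (s - 1) := by
  have hs1 : s - 1 ≠ 0 := sub_ne_zero.mpr hs
  have heq : riemannZeta =ᶠ[𝓝 s] fun z ↦ riemannZeta₁ z / (z - 1) := by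
    filter_upwards [isOpen_ne.mem_nhds hs] with z hz
    rw [riemannZeta_eq_inv_sub_mul hz, inv_mul_eq_div]
  rw [(logDeriv_congr_nhds heq).self_of_nhds, logDeriv_div s hζ hs1
    (differentiable_riemannZeta₁ s) (by fun_prop), logDeriv_apply (fun z ↦ z - 1),
    deriv_sub_const, deriv_id'']

theorem LSeries_vonMangoldt_eq_one_div_sub_logDeriv {s : ℂ} (hs : 1 < s.re) :
    L ↗Λ s = 1 / (s - 1) - logDeriv riemannZeta₁ s := by
  rw [ArithmeticFunction.LSeries_vonMangoldt_eq_deriv_riemannZeta_div hs, neg_div,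
    ← logDeriv_apply, logDeriv_riemannZeta (fun h ↦ by simp [h] at hs)
      (riemannZeta₁_ne_zero_of_one_le_re hs.le), neg_sub]

theorem norm_LSeries_le_norm_LSeries_re {a : ℕ → ℝ} {b : ℕ → ℂ} (hab : ∀ n ≠ 0, ‖b n‖ ≤ a n)
    {s : ℂ} (hsum : LSeriesSummable ↗a s.re) : ‖L b s‖ ≤ ‖L ↗a s.re‖ := by
  refine (tsum_of_norm_bounded (Complex.hasSum_re hsum.hasSum) fun n ↦ ?_).trans
    (Complex.re_le_norm _)
  obtain rfl | hn := eq_or_ne n 0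
  · simp
  · have hpow : ((n : ℂ) ^ (s.re : ℂ)) = ((n : ℝ) ^ s.re : ℝ) := by
      rw [Complex.ofReal_cpow n.cast_nonneg, Complex.ofReal_natCast]
    rw [LSeries.norm_term_eq, if_neg hn, LSeries.term_of_ne_zero hn, hpow,
      ← Complex.ofReal_div, Complex.ofReal_re]
    gcongr
    exact hab n hn

theorem norm_riemannZeta_one_add_le {ε : ℝ} (hε : 0 < ε) (hε1 : ε ≤ 1) :
    ‖riemannZeta (1 + ε : ℝ)‖ ≤ 6 / ε := by
  have hsub : ((1 + ε : ℝ) : ℂ) - 1 = ε := by push_cast; ring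
  have hne : ((1 + ε : ℝ) : ℂ) ≠ 1 :=
    sub_ne_zero.mp (hsub ▸ Complex.ofReal_ne_zero.mpr hε.ne')
  have h0 : ‖riemannZeta₀ (1 + ε : ℝ)‖ ≤ 1 + 2 * (1 + ε) := by
    have := norm_riemannZeta₀_le (s := ((1 + ε : ℝ) : ℂ)) (by rw [Complex.ofReal_re]; linarith)
    rwa [Complex.norm_real, Real.norm_of_nonneg (by positivity)] at this
  have h5 : 1 + 2 * (1 + ε) ≤ 5 / ε := by
    rw [le_div_iff₀ hε]; nlinarith
  calc ‖riemannZeta (1 + ε : ℝ)‖ ≤ ‖(ε : ℂ)⁻¹‖ + ‖riemannZeta₀ (1 + ε : ℝ)‖ := by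
        rw [riemannZeta_eq_inv_sub_add hne, hsub]; exact norm_add_le _ _
    _ ≤ ε⁻¹ + 5 / ε := by
        rw [norm_inv, Complex.norm_real, Real.norm_of_nonneg hε.le]; gcongr; exact h0.trans h5
    _ = 6 / ε := by ring

-- The lower bound for `ζ` is the upper bound for `1 / ζ = ∑ μ(n) n⁻ˢ`.
theorem sq_div_six_le_norm_riemannZeta₁ {s : ℂ} {ε : ℝ} (hε : 0 < ε) (hε1 : ε ≤ 1)
    (hs : s.re = 1 + ε) : ε ^ 2 / 6 ≤ ‖riemannZeta₁ s‖ := by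
  have hs' : 1 < s.re := by linarith
  have hs1 : s ≠ 1 := fun h ↦ by simp [h] at hs'
  have hμ : ‖L ↗μ s‖ ≤ 6 / ε := by
    have h1 : 1 < (s.re : ℂ).re := by simpa using hs'
    have hone : ↗(1 : ℕ → ℝ) = 1 := funext fun _ ↦ Complex.ofReal_one
    have h := norm_LSeries_le_norm_LSeries_re (a := 1) (b := ↗μ) (s := s) (fun n _ ↦ by
      rw [Complex.norm_intCast, Pi.one_apply]
      exact_mod_cast ArithmeticFunction.abs_moebius_le_one) (hone ▸ LSeriesSummable_one_iff.mpr h1)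
    rw [hone, LSeries_one_eq_riemannZeta h1, hs] at h
    exact h.trans (norm_riemannZeta_one_add_le hε hε1)
  have hinv : riemannZeta s * L ↗μ s = 1 := by
    rw [← ArithmeticFunction.LSeries_zeta_eq_riemannZeta hs']
    exact ArithmeticFunction.LSeries_zeta_mul_Lseries_moebius hs'
  have hζ : ε / 6 ≤ ‖riemannZeta s‖ := by
    have h1 : 1 ≤ ‖riemannZeta s‖ * (6 / ε) := by
      rw [← norm_one (α := ℂ), ← hinv, norm_mul]; gcongr
    rwa [← mul_div_assoc, one_le_div hε, mul_comm, ← div_le_iff₀' (by norm_num)] at h1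
  have hsub : ε ≤ ‖s - 1‖ := by
    simpa [hs] using (le_abs_self _).trans (Complex.abs_re_le_norm (s - 1))
  calc ε ^ 2 / 6 = ε * (ε / 6) := by ring
    _ ≤ ‖s - 1‖ * ‖riemannZeta s‖ := by gcongr
    _ = ‖riemannZeta₁ s‖ := by
        rw [← norm_mul, riemannZeta_eq_inv_sub_mul hs1, mul_inv_cancel_left₀ (sub_ne_zero.mpr hs1)]

theorem re_term_add_mul_I (a : ℕ → ℝ) (σ t : ℝ) {n : ℕ} (hn : n ≠ 0) :
    (LSeries.term ↗a (σ + t * Complex.I) n).re =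
      a n * (n : ℝ) ^ (-σ) * Real.cos (t * Real.log n) := by
  have hnc : (n : ℂ) ≠ 0 := Nat.cast_ne_zero.mpr hn
  have hσ : (n : ℂ) ^ (-(σ : ℂ)) = (((n : ℝ) ^ (-σ) : ℝ) : ℂ) := by
    rw [Complex.ofReal_cpow n.cast_nonneg, Complex.ofReal_neg, Complex.ofReal_natCast]
  have ht : (n : ℂ) ^ (-(t * Complex.I)) =
      Complex.exp (((-(t * Real.log n) : ℝ) : ℂ) * Complex.I) := by
    rw [Complex.cpow_def_of_ne_zero hnc, ← Complex.natCast_log]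
    push_cast
    ring_nf
  rw [LSeries.term_of_ne_zero hn, div_eq_mul_inv, ← Complex.cpow_neg, neg_add,
    Complex.cpow_add _ _ hnc, hσ, ht, ← mul_assoc, ← Complex.ofReal_mul, Complex.re_ofReal_mul,
    Complex.exp_ofReal_mul_I_re, Real.cos_neg]

theorem three_four_one_nonneg {a : ℕ → ℝ} (ha : ∀ n, 0 ≤ a n) {σ : ℝ}
    (hsum : LSeriesSummable ↗a σ) (t : ℝ) :
    0 ≤ 3 * (L ↗a σ).re + 4 * (L ↗a (σ + t * Complex.I)).re +
      (L ↗a (σ + (2 * t : ℝ) * Complex.I)).re := by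
  have hasSum (u : ℝ) : HasSum (fun n ↦ (LSeries.term ↗a (σ + u * Complex.I) n).re)
      (L ↗a (σ + u * Complex.I)).re :=
    Complex.hasSum_re (hsum.of_re_le_re (by simp)).hasSum
  have h0 := hasSum 0
  rw [Complex.ofReal_zero, zero_mul, add_zero] at h0
  refine (((h0.mul_left 3).add ((hasSum t).mul_left 4)).add (hasSum (2 * t))).nonneg fun n ↦ ?_
  obtain rfl | hn := eq_or_ne n 0
  · simp
  have h1 := re_term_add_mul_I a σ 0 hn
  rw [Complex.ofReal_zero, zero_mul, zero_mul, add_zero, Real.cos_zero, mul_one] at h1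
  rw [h1, re_term_add_mul_I a σ t hn, re_term_add_mul_I a σ _ hn, mul_assoc 2 t, Real.cos_two_mul]
  have hcoef : 0 ≤ a n * (n : ℝ) ^ (-σ) := mul_nonneg (ha n) (by positivity)
  nlinarith [mul_nonneg hcoef (sq_nonneg (Real.cos (t * Real.log n) + 1))]

end ZetaBounds

section ZeroFreeRegion

/-- The exponent `M` such that `ζ₁` is at most `exp M * ‖ζ₁ s‖` on the disk of radius `1 / 2` about
a point `s` with imaginary part `t` at distance `ε` to the right of the line `Re s = 1`. -/
noncomputable def zetaGrowth (t ε : ℝ) : ℝ := 2 * Real.log (|t| + 3) + 3 + 2 * Real.log (1 / ε)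

theorem one_le_log_abs_add_three (t : ℝ) : 1 ≤ Real.log (|t| + 3) := by
  rw [Real.le_log_iff_exp_le (by positivity)]
  linarith [Real.exp_one_lt_d9, abs_nonneg t]

theorem zetaGrowth_pos (t : ℝ) {ε : ℝ} (hε : 0 < ε) (hε1 : ε ≤ 1) : 0 < zetaGrowth t ε := by
  have hlog : 0 ≤ Real.log (1 / ε) := Real.log_nonneg ((one_le_div hε).mpr hε1)
  rw [zetaGrowth]
  linarith [one_le_log_abs_add_three t]

theorem exp_zetaGrowth (t : ℝ) {ε : ℝ} (hε : 0 < ε) :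
    Real.exp (zetaGrowth t ε) = (|t| + 3) ^ 2 * Real.exp 3 * (1 / ε) ^ 2 := by
  rw [zetaGrowth, Real.exp_add, Real.exp_add, two_mul, two_mul, Real.exp_add, Real.exp_add,
    Real.exp_log (by positivity), Real.exp_log (by positivity)]
  ring

theorem zetaGrowth_one_div_mul_le (t : ℝ) {K L : ℝ} (hK : 0 < K) (hL : 0 < L) :
    zetaGrowth t (1 / (K * L)) ≤ 2 * Real.log (|t| + 3) + 2 * Real.log K + 2 * L + 1 := by
  rw [zetaGrowth, one_div_one_div, Real.log_mul hK.ne' hL.ne']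
  linarith [Real.log_le_sub_one_of_pos hL]

theorem norm_riemannZeta₁_add_le {s z : ℂ} {ε : ℝ} (hε : 0 < ε) (hε1 : ε ≤ 1 / 2)
    (hs : s.re = 1 + ε) (hz : ‖z‖ ≤ 1 / 2) :
    ‖riemannZeta₁ (s + z)‖ ≤ Real.exp (zetaGrowth s.im ε) * ‖riemannZeta₁ s‖ := by
  have hre : 1 / 2 ≤ (s + z).re := by
    rw [Complex.add_re, hs]
    linarith [(abs_le.mp ((Complex.abs_re_le_norm z).trans hz)).1]
  have hnorm : 1 + ‖s + z‖ ≤ |s.im| + 3 := by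
    have := Complex.norm_le_abs_re_add_abs_im s
    rw [hs, abs_of_pos (by linarith)] at this
    linarith [norm_add_le s z]
  have hexp : 12 ≤ Real.exp 3 := by
    have h := pow_le_pow_left₀ (by norm_num) Real.exp_one_gt_d9.le 3
    rw [← Real.exp_nat_mul] at h
    norm_num at h
    linarith
  calc ‖riemannZeta₁ (s + z)‖ ≤ 2 * (1 + ‖s + z‖) ^ 2 := norm_riemannZeta₁_le hre
    _ ≤ 2 * (|s.im| + 3) ^ 2 := by gcongr
    _ = (|s.im| + 3) ^ 2 * 12 * (1 / ε) ^ 2 * (ε ^ 2 / 6) := by field_simp; norm_num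
    _ ≤ (|s.im| + 3) ^ 2 * Real.exp 3 * (1 / ε) ^ 2 * ‖riemannZeta₁ s‖ := by
        gcongr
        exact sq_div_six_le_norm_riemannZeta₁ hε (by linarith) hs
    _ = Real.exp (zetaGrowth s.im ε) * ‖riemannZeta₁ s‖ := by rw [exp_zetaGrowth _ hε]

theorem logDeriv_comp_const_add (f : ℂ → ℂ) (a z : ℂ) :
    logDeriv (fun w ↦ f (a + w)) z = logDeriv f (a + z) := by
  rw [logDeriv_apply, logDeriv_apply, deriv_comp_const_add]

variable {s : ℂ} {ε : ℝ}

theorem re_le_zero_of_riemannZeta₁_add_eq_zero (hs : 1 ≤ s.re) {z : ℂ}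
    (h : riemannZeta₁ (s + z) = 0) : z.re ≤ 0 := by
  by_contra! hz
  exact riemannZeta₁_ne_zero_of_one_le_re (by rw [Complex.add_re]; linarith) h

theorem neg_le_re_logDeriv_riemannZeta₁ (hε : 0 < ε) (hε1 : ε ≤ 1 / 2) (hs : s.re = 1 + ε) :
    -(96 * zetaGrowth s.im ε) ≤ (logDeriv riemannZeta₁ s).re := by
  have h := neg_le_re_logDeriv_zero (f := fun z ↦ riemannZeta₁ (s + z)) one_half_pos
    (zetaGrowth_pos s.im hε (by linarith))
    (Differentiable.diffContOnCl (by fun_prop))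
    (fun z hz ↦ by simpa using norm_riemannZeta₁_add_le hε hε1 hs (by simpa using hz))
    (by simpa using riemannZeta₁_ne_zero_of_one_le_re (by linarith))
    (fun z _ ↦ re_le_zero_of_riemannZeta₁_add_eq_zero (by linarith))
  rw [logDeriv_comp_const_add, add_zero] at h
  linarith

theorem one_div_sub_le_re_logDeriv_riemannZeta₁ (hε : 0 < ε) (hε1 : ε ≤ 1 / 2)
    (hs : s.re = 1 + ε) {b : ℝ} (hb : 0 < b) (hb1 : b < 1 / 2) (h0 : riemannZeta₁ (s - b) = 0) :
    1 / b - 2 - 96 * zetaGrowth s.im ε ≤ (logDeriv riemannZeta₁ s).re := by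
  have h := one_div_sub_le_re_logDeriv_zero (f := fun z ↦ riemannZeta₁ (s + z)) one_half_pos
    (zetaGrowth_pos s.im hε (by linarith))
    (Differentiable.diffContOnCl (by fun_prop))
    (fun z hz ↦ by simpa using norm_riemannZeta₁_add_le hε hε1 hs (by simpa using hz))
    (by simpa using riemannZeta₁_ne_zero_of_one_le_re (by linarith))
    (fun z _ ↦ re_le_zero_of_riemannZeta₁_add_eq_zero (by linarith)) hb hb1
    (by rwa [← sub_eq_add_neg])
  rw [logDeriv_comp_const_add, add_zero] at h
  linarith

theorem exists_norm_logDeriv_riemannZeta₁_le : ∃ A : ℝ, 0 < A ∧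
    ∀ σ : ℝ, 1 ≤ σ → σ ≤ 2 → ‖logDeriv riemannZeta₁ σ‖ ≤ A := by
  have hcont : ContinuousOn (fun σ : ℝ ↦ logDeriv riemannZeta₁ σ) (Set.Icc 1 2) := by
    have hderiv : Continuous (deriv riemannZeta₁) :=
      (differentiable_riemannZeta₁.contDiff (n := 1)).continuous_deriv le_rfl
    exact (hderiv.comp Complex.continuous_ofReal).continuousOn.div
      (differentiable_riemannZeta₁.continuous.comp Complex.continuous_ofReal).continuousOn
      fun σ hσ ↦ riemannZeta₁_ne_zero_of_one_le_re (by simpa using hσ.1)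
  obtain ⟨A, hA⟩ := isCompact_Icc.exists_bound_of_continuousOn hcont
  exact ⟨max A 1, by positivity, fun σ h1 h2 ↦ (hA σ ⟨h1, h2⟩).trans (le_max_left _ _)⟩

theorem re_one_div_add_mul_I_le (hε : 0 < ε) {t τ : ℝ} (hτ : 0 < τ) (ht : τ ≤ |t|) :
    (1 / (ε + t * Complex.I)).re ≤ ε / τ ^ 2 := by
  have hsq : τ ^ 2 ≤ t ^ 2 := by rw [← sq_abs t]; gcongr
  have hre : (ε + t * Complex.I).re = ε := by simp
  rw [one_div, Complex.inv_re, Complex.normSq_add_mul_I, hre]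
  gcongr
  linarith [sq_nonneg ε]

theorem three_four_one_logDeriv_le (hε : 0 < ε) {t τ : ℝ} (hτ : 0 < τ) (ht : τ ≤ |t|) :
    3 * (logDeriv riemannZeta₁ (1 + ε : ℝ)).re +
        4 * (logDeriv riemannZeta₁ ((1 + ε : ℝ) + t * Complex.I)).re +
        (logDeriv riemannZeta₁ ((1 + ε : ℝ) + (2 * t : ℝ) * Complex.I)).re ≤
      3 / ε + 5 * ε / τ ^ 2 := by
  have h := three_four_one_nonneg (a := ArithmeticFunction.vonMangoldt)
    (fun n ↦ ArithmeticFunction.vonMangoldt_nonneg)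
    (ArithmeticFunction.LSeriesSummable_vonMangoldt (s := (1 + ε : ℝ)) (by simpa using hε)) t
  have hL (u : ℝ) : LSeries (fun n ↦ (ArithmeticFunction.vonMangoldt n : ℂ))
      ((1 + ε : ℝ) + u * Complex.I) =
        1 / (ε + u * Complex.I) - logDeriv riemannZeta₁ ((1 + ε : ℝ) + u * Complex.I) := by
    rw [LSeries_vonMangoldt_eq_one_div_sub_logDeriv (by simpa using hε)]
    congr 2
    push_cast
    ring
  have hL0 := hL 0
  simp only [Complex.ofReal_zero, zero_mul, add_zero] at hL0
  have hre : (1 / (ε : ℂ)).re = 1 / ε := by norm_cast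
  rw [hL0, hL, hL, Complex.sub_re, Complex.sub_re, Complex.sub_re, hre] at h
  have h1 := re_one_div_add_mul_I_le hε hτ ht
  have h2 := re_one_div_add_mul_I_le hε hτ (t := 2 * t) (by rw [abs_mul, abs_two]; linarith)
  rw [mul_div_assoc, div_eq_mul_one_div 3 ε]
  linarith

theorem four_div_le_of_riemannZeta₁_eq_zero {A : ℝ}
    (hA : ∀ σ : ℝ, 1 ≤ σ → σ ≤ 2 → ‖logDeriv riemannZeta₁ σ‖ ≤ A) (hε : 0 < ε) (hε1 : ε ≤ 1 / 2)
    {τ : ℝ} (hτ : 0 < τ) (hs : τ ≤ |s.im|) (hs0 : riemannZeta₁ s = 0) (hb : 0 < 1 + ε - s.re)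
    (hb1 : 1 + ε - s.re < 1 / 2) :
    4 / (1 + ε - s.re) ≤ 3 / ε + 5 * ε / τ ^ 2 + 3 * A + 8 + 384 * zetaGrowth s.im ε +
      96 * zetaGrowth (2 * s.im) ε := by
  have h341 := three_four_one_logDeriv_le hε hτ hs
  have hsub : ((1 + ε : ℝ) + s.im * Complex.I : ℂ) - (1 + ε - s.re : ℝ) = s := by
    apply Complex.ext <;> simp
  have hreal := (abs_le.mp ((Complex.abs_re_le_norm _).trans
    (hA (1 + ε) (by linarith) (by linarith)))).1
  have hzero := one_div_sub_le_re_logDeriv_riemannZeta₁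
    (s := (1 + ε : ℝ) + s.im * Complex.I) hε hε1 (by simp) hb hb1 (by rwa [hsub])
  have hdouble := neg_le_re_logDeriv_riemannZeta₁
    (s := (1 + ε : ℝ) + (2 * s.im : ℝ) * Complex.I) hε hε1 (by simp)
  have him (t : ℝ) : ((1 + ε : ℝ) + t * Complex.I : ℂ).im = t := by simp
  rw [him] at hzero hdouble
  rw [div_eq_mul_one_div]
  linarith

theorem exists_add_mul_log_le (A B k : ℝ) {c : ℝ} (hc : 0 < c) :
    ∃ K, k ≤ K ∧ A + B * Real.log K ≤ c * K := by
  have hlog : (fun K ↦ A + B * Real.log K) =o[Filter.atTop] (id : ℝ → ℝ) :=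
    (Asymptotics.isLittleO_const_id_atTop A).add (Real.isLittleO_log_id_atTop.const_mul_left B)
  obtain ⟨K, hbound, hk, hK⟩ := ((hlog.bound hc).and
    ((Filter.eventually_ge_atTop k).and (Filter.eventually_ge_atTop 0))).exists
  refine ⟨K, hk, (le_abs_self _).trans ?_⟩
  simpa [abs_of_nonneg hK] using hbound

theorem log_abs_two_mul_add_three_le (t : ℝ) :
    Real.log (|2 * t| + 3) ≤ Real.log (|t| + 3) + 1 := by
  rw [← Real.log_exp 1, ← Real.log_mul (by positivity) (Real.exp_pos 1).ne', abs_mul, abs_two]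
  gcongr
  nlinarith [abs_nonneg t, Real.exp_one_gt_d9]

theorem exists_re_le_of_riemannZeta₁_eq_zero_of_le_abs_im {τ : ℝ} (hτ : 0 < τ) :
    ∃ c : ℝ, 0 < c ∧ c ≤ 1 / 4 ∧ ∀ s : ℂ, riemannZeta₁ s = 0 → τ ≤ |s.im| →
      s.re ≤ 1 - c / Real.log (|s.im| + 3) := by
  obtain ⟨A, hA0, hA⟩ := exists_norm_logDeriv_riemannZeta₁_le
  obtain ⟨K, hK8, hK⟩ :=
    exists_add_mul_log_le (3 * A + 5 / τ ^ 2 + 2600) 960 8 (c := 1 / 4) (by norm_num)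
  refine ⟨3 / (13 * K), by positivity, by rw [div_le_iff₀ (by positivity)]; linarith, ?_⟩
  intro s hs0 hs
  have hL := one_le_log_abs_add_three s.im
  have hL2 := log_abs_two_mul_add_three_le s.im
  have hG := zetaGrowth_one_div_mul_le s.im (K := K) (L := Real.log (|s.im| + 3))
    (by linarith) (by linarith)
  have hG2 := zetaGrowth_one_div_mul_le (2 * s.im) (K := K) (L := Real.log (|s.im| + 3))
    (by linarith) (by linarith)
  set L := Real.log (|s.im| + 3)
  have hKL : 8 ≤ K * L := by nlinarith
  have hε1 : 1 / (K * L) ≤ 1 / 8 := one_div_le_one_div_of_le (by norm_num) hKL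
  have hε : 0 < 1 / (K * L) := by positivity
  have hre : s.re < 1 := by
    by_contra! h
    exact riemannZeta₁_ne_zero_of_one_le_re h hs0
  suffices h : 16 / (13 * K * L) ≤ 1 + 1 / (K * L) - s.re by
    have : 3 / (13 * K) / L = 16 / (13 * K * L) - 1 / (K * L) := by field_simp; norm_num
    linarith
  rcases le_or_gt (1 / 2) (1 + 1 / (K * L) - s.re) with hb | hb
  · refine le_trans ?_ hb
    rw [div_le_iff₀ (by positivity)]
    linarith
  have key := four_div_le_of_riemannZeta₁_eq_zero hA hε (by linarith) hτ hs hs0 (by linarith) hb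
  have hετ : 5 * (1 / (K * L)) / τ ^ 2 ≤ 5 / τ ^ 2 := by gcongr; linarith
  have hconst : 3 * A + 5 / τ ^ 2 + 680 + 960 * Real.log K + 1920 * L ≤ 1 / 4 * K * L := by
    have hlog : 0 ≤ Real.log K := Real.log_nonneg (by linarith)
    have : 3 * A + 5 / τ ^ 2 + 680 + 960 * Real.log K ≤
        (3 * A + 5 / τ ^ 2 + 680 + 960 * Real.log K) * L :=
      le_mul_of_one_le_right (by positivity) hL
    linarith [mul_le_mul_of_nonneg_right hK (zero_le_one.trans hL)]
  have hdiv : 4 / (1 + 1 / (K * L) - s.re) ≤ 13 / 4 * (K * L) := by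
    rw [div_div_eq_mul_div, div_one] at key
    linarith
  rw [div_le_iff₀ (by linarith)] at hdiv
  rw [div_le_iff₀ (by positivity)]
  linarith

theorem exists_riemannZeta₁_zero_free_near_one :
    ∃ τ : ℝ, 0 < τ ∧ ∀ s : ℂ, riemannZeta₁ s = 0 → |s.im| < τ → s.re ≤ 1 - τ := by
  have hev : ∀ᶠ s in nhds (1 : ℂ), riemannZeta₁ s ≠ 0 :=
    differentiable_riemannZeta₁.continuous.continuousAt.eventually_ne
      (riemannZeta₁_ne_zero_of_one_le_re (by simp))
  obtain ⟨δ, hδ, hball⟩ := Metric.eventually_nhds_iff.mp hev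
  refine ⟨δ / 2, by positivity, fun s hs0 him ↦ ?_⟩
  by_contra! hre
  have hre1 : s.re < 1 := by
    by_contra! h
    exact riemannZeta₁_ne_zero_of_one_le_re h hs0
  refine hball ?_ hs0
  have h := Complex.norm_le_abs_re_add_abs_im (s - 1)
  simp only [Complex.sub_re, Complex.sub_im, Complex.one_re, Complex.one_im, sub_zero] at h
  rw [abs_of_neg (by linarith)] at h
  rw [dist_eq_norm]
  linarith

theorem exists_re_le_of_riemannZeta₁_eq_zero : ∃ c : ℝ, 0 < c ∧ c ≤ 1 / 4 ∧
    ∀ s : ℂ, riemannZeta₁ s = 0 → s.re ≤ 1 - c / Real.log (|s.im| + 3) := by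
  obtain ⟨τ, hτ, hnear⟩ := exists_riemannZeta₁_zero_free_near_one
  obtain ⟨c, hc, hc4, hfar⟩ := exists_re_le_of_riemannZeta₁_eq_zero_of_le_abs_im hτ
  refine ⟨min c τ, by positivity, (min_le_left _ _).trans hc4, fun s hs0 ↦ ?_⟩
  have hL := one_le_log_abs_add_three s.im
  rcases lt_or_ge |s.im| τ with him | him
  · have : min c τ / Real.log (|s.im| + 3) ≤ τ :=
      (div_le_self (by positivity) hL).trans (min_le_right _ _)
    linarith [hnear s hs0 him]
  · have : min c τ / Real.log (|s.im| + 3) ≤ c / Real.log (|s.im| + 3) := by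
      gcongr
      exact min_le_left _ _
    linarith [hfar s hs0 him]

theorem norm_logDeriv_riemannZeta₁_le_of_forall_ne_zero {η : ℝ} (hη : 0 < η) (hη1 : η ≤ 1 / 8)
    (hne : ∀ w : ℂ, |w.im| ≤ |s.im| + 1 → 1 - 4 * η < w.re → riemannZeta₁ w ≠ 0)
    (hs : 1 - η ≤ s.re) (hs1 : s.re ≤ 1 + 3 * η) :
    ‖logDeriv riemannZeta₁ s‖ ≤ 6 * zetaGrowth s.im η / η := by
  obtain ⟨p, hp⟩ : ∃ p : ℂ, p = 1 + η + s.im * Complex.I := ⟨_, rfl⟩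
  have hpre : p.re = 1 + η := by simp [hp]
  have hpim : p.im = s.im := by simp [hp]
  have hsp : p + (s.re - (1 + η) : ℝ) = s := by apply Complex.ext <;> simp [hp]
  have h := norm_logDeriv_le_of_norm_le_exp_mul (h := fun z ↦ riemannZeta₁ (p + z)) (r := 4 * η)
    (M := zetaGrowth p.im η) (by positivity) (zetaGrowth_pos _ hη (by linarith))
    (Differentiable.differentiableOn (by fun_prop))
    (fun z hz ↦ by
      rw [mem_ball_zero_iff] at hz
      have hzre := abs_lt.mp ((Complex.abs_re_le_norm z).trans_lt hz)
      have hzim := (Complex.abs_im_le_norm z).trans_lt hz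
      apply hne
      · rw [Complex.add_im, hpim]
        linarith [abs_add_le s.im z.im]
      · rw [Complex.add_re, hpre]
        linarith)
    (fun z hz ↦ by
      rw [mem_ball_zero_iff] at hz
      simpa using norm_riemannZeta₁_add_le hη (by linarith) hpre (z := z) (by linarith))
    (z := (s.re - (1 + η) : ℝ))
    (by
      rw [Complex.norm_real, Real.norm_eq_abs, abs_le]
      constructor <;> linarith)
  rw [logDeriv_comp_const_add, hsp, hpim] at h
  refine h.trans_eq ?_
  field_simp
  ring

theorem exists_norm_logDeriv_riemannZeta₁_le_log_sq : ∃ c A : ℝ, 0 < c ∧ c ≤ 1 / 8 ∧ 0 < A ∧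
    ∀ T : ℝ, ∀ s : ℂ, |s.im| ≤ T → 1 - c / Real.log (T + 4) ≤ s.re →
      s.re ≤ 1 + 3 * (c / Real.log (T + 4)) →
        riemannZeta₁ s ≠ 0 ∧ ‖logDeriv riemannZeta₁ s‖ ≤ A * Real.log (T + 4) ^ 2 := by
  obtain ⟨c, hc, hc4, hzero⟩ := exists_re_le_of_riemannZeta₁_eq_zero
  have hlog : 0 ≤ Real.log (1 / (c / 4)) :=
    Real.log_nonneg (by rw [le_div_iff₀ (by positivity)]; linarith)
  refine ⟨c / 4, 6 * (5 + 2 * Real.log (1 / (c / 4))) / (c / 4), by positivity, by linarith,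
    by positivity, ?_⟩
  intro T s him hre hre1
  have hlog_le {t : ℝ} (ht : |t| ≤ T + 1) : Real.log (|t| + 3) ≤ Real.log (T + 4) :=
    Real.log_le_log (by positivity) (by linarith)
  have hL : 1 ≤ Real.log (T + 4) := (one_le_log_abs_add_three s.im).trans (hlog_le (by linarith))
  have hG := zetaGrowth_one_div_mul_le s.im (K := 1 / (c / 4)) (L := Real.log (T + 4))
    (by positivity) (by linarith)
  have hLs := hlog_le (t := s.im) (by linarith)
  set L := Real.log (T + 4)
  have hη : 0 < c / 4 / L := by positivity
  have hη1 : c / 4 / L ≤ 1 / 8 := (div_le_self (by positivity) hL).trans (by linarith)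
  have hne (w : ℂ) (hw : |w.im| ≤ T + 1) (hw1 : 1 - 4 * (c / 4 / L) < w.re) :
      riemannZeta₁ w ≠ 0 := by
    intro h0
    have hcL : c / L ≤ c / Real.log (|w.im| + 3) := by
      have := one_le_log_abs_add_three w.im
      gcongr
      exact hlog_le hw
    have : 4 * (c / 4 / L) = c / L := by ring
    linarith [hzero w h0]
  refine ⟨hne s (by linarith) (by linarith), ?_⟩
  have hGL : zetaGrowth s.im (c / 4 / L) ≤ (5 + 2 * Real.log (1 / (c / 4))) * L := by
    have : 1 / (1 / (c / 4) * L) = c / 4 / L := by field_simp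
    rw [this] at hG
    nlinarith
  calc ‖logDeriv riemannZeta₁ s‖ ≤ 6 * zetaGrowth s.im (c / 4 / L) / (c / 4 / L) :=
        norm_logDeriv_riemannZeta₁_le_of_forall_ne_zero hη hη1
          (fun w hw ↦ hne w (by linarith)) hre hre1
    _ ≤ 6 * ((5 + 2 * Real.log (1 / (c / 4))) * L) / (c / 4 / L) := by gcongr
    _ = 6 * (5 + 2 * Real.log (1 / (c / 4))) / (c / 4) * L ^ 2 := by field_simp

end ZeroFreeRegion

section Perron

open MeasureTheory Set

/-- The Riesz (Cesàro) weight of order one, `t ↦ (1 - t)⁺`; its Mellin transform decays fast enough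
for Perron's formula to converge absolutely. -/
def rieszKernel (t : ℝ) : ℝ := max 0 (1 - t)

/-- The Mellin transform `1 / (s * (s + 1))` of the Riesz weight. -/
noncomputable def perronWeight (s : ℂ) : ℂ := 1 / (s * (s + 1))

theorem rieszKernel_of_one_le {t : ℝ} (ht : 1 ≤ t) : rieszKernel t = 0 :=
  max_eq_left (by linarith)

theorem mul_add_one_ne_zero {s : ℂ} (hs : 0 < s.re) : s * (s + 1) ≠ 0 := by
  refine mul_ne_zero (fun h ↦ by simp [h] at hs) fun h ↦ ?_
  have := congrArg Complex.re h
  rw [Complex.add_re, Complex.one_re, Complex.zero_re] at this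
  linarith

theorem hasMellin_rieszKernel {s : ℂ} (hs : 0 < s.re) :
    HasMellin (fun t ↦ (rieszKernel t : ℂ)) s (perronWeight s) := by
  have h1 := hasMellin_one_Ioc hs
  have h2 := hasMellin_cpow_Ioc 1 (s := s) (by rw [Complex.one_re]; linarith)
  have h := hasMellin_sub h1.1 h2.1
  have heq : EqOn (fun t : ℝ ↦ (t : ℂ) ^ (s - 1) • ((Ioc 0 1).indicator (fun _ ↦ (1 : ℂ)) t -
      (Ioc 0 1).indicator (fun t : ℝ ↦ (t : ℂ) ^ (1 : ℂ)) t))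
      (fun t : ℝ ↦ (t : ℂ) ^ (s - 1) • (rieszKernel t : ℂ)) (Ioi 0) := by
    intro t ht
    rcases le_or_gt t 1 with h1 | h1
    · simp [rieszKernel, indicator_of_mem (show t ∈ Ioc 0 1 from ⟨ht, h1⟩), h1]
    · simp [rieszKernel_of_one_le h1.le, indicator_of_notMem fun h : t ∈ Ioc 0 1 ↦ h1.not_ge h.2]
  refine ⟨h.1.congr_fun heq measurableSet_Ioi, ?_⟩
  have hs0 := left_ne_zero_of_mul (mul_add_one_ne_zero hs)
  have hs1 := right_ne_zero_of_mul (mul_add_one_ne_zero hs)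
  calc mellin (fun t ↦ (rieszKernel t : ℂ)) s = 1 / s - 1 / (s + 1) := by
        rw [← h1.2, ← h2.2, ← h.2]
        exact (setIntegral_congr_fun measurableSet_Ioi heq).symm
    _ = perronWeight s := by rw [perronWeight]; field_simp; ring

theorem norm_perronWeight_le {s : ℂ} (hs : 0 < s.re) :
    ‖perronWeight s‖ ≤ (s.re ^ 2 + s.im ^ 2)⁻¹ := by
  have hsq : ‖s‖ ^ 2 = s.re ^ 2 + s.im ^ 2 := by rw [Complex.sq_norm, Complex.normSq_apply]; ring
  have hpos : 0 < ‖s‖ := hs.trans_le (Complex.re_le_norm s)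
  have hle : ‖s‖ ≤ ‖s + 1‖ := by
    rw [← sq_le_sq₀ (norm_nonneg _) (norm_nonneg _), Complex.sq_norm, Complex.sq_norm,
      Complex.normSq_apply, Complex.normSq_apply, Complex.add_re, Complex.add_im, Complex.one_re,
      Complex.one_im]
    nlinarith
  rw [perronWeight, one_div, norm_inv, norm_mul, ← hsq, sq]
  gcongr

theorem differentiableAt_perronWeight {s : ℂ} (hs : 0 < s.re) :
    DifferentiableAt ℂ perronWeight s := by
  exact (differentiableAt_const 1).div (by fun_prop) (mul_add_one_ne_zero hs)

variable {σ : ℝ}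

theorem continuous_perronWeight_add_mul_I (hσ : 0 < σ) :
    Continuous fun t : ℝ ↦ perronWeight (σ + t * Complex.I) :=
  continuous_iff_continuousAt.mpr fun _ ↦
    (differentiableAt_perronWeight (by simpa using hσ)).continuousAt.comp
      (f := fun t : ℝ ↦ (σ + t * Complex.I : ℂ)) (by fun_prop)

theorem integrable_inv_sq_add_sq (hσ : 0 < σ) : Integrable fun t : ℝ ↦ (σ ^ 2 + t ^ 2)⁻¹ := by
  convert (integrable_inv_one_add_sq.comp_div hσ.ne').const_mul (σ ^ 2)⁻¹ using 2 with t
  field_simp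

theorem integrable_perronWeight_add_mul_I (hσ : 0 < σ) :
    Integrable fun t : ℝ ↦ perronWeight (σ + t * Complex.I) :=
  (integrable_inv_sq_add_sq hσ).mono' (continuous_perronWeight_add_mul_I hσ).aestronglyMeasurable
    (.of_forall fun t ↦ by
      simpa using norm_perronWeight_le (s := σ + t * Complex.I) (by simpa using hσ))

theorem rieszKernel_eq_integral (hσ : 0 < σ) {y : ℝ} (hy : 0 < y) :
    (rieszKernel y : ℂ) = (1 / (2 * Real.pi) : ℝ) •
      ∫ t : ℝ, (y : ℂ) ^ (-(σ + t * Complex.I)) * perronWeight (σ + t * Complex.I) := by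
  have hm (t : ℝ) : mellin (fun t ↦ (rieszKernel t : ℂ)) (σ + t * Complex.I) =
      perronWeight (σ + t * Complex.I) := (hasMellin_rieszKernel (by simpa using hσ)).2
  have h := mellinInv_mellin_eq σ (fun t ↦ (rieszKernel t : ℂ)) hy
    (hasMellin_rieszKernel (by simpa using hσ)).1
    (by simpa only [Complex.VerticalIntegrable, hm] using integrable_perronWeight_add_mul_I hσ)
    (by unfold rieszKernel; fun_prop)
  rw [← h, mellinInv]
  simp only [hm, smul_eq_mul]

theorem continuous_term_add_mul_I (a : ℕ → ℂ) (n : ℕ) (σ : ℝ) :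
    Continuous fun t : ℝ ↦ LSeries.term a (σ + t * Complex.I) n := by
  obtain rfl | hn := eq_or_ne n 0
  · simpa only [LSeries.term_zero] using continuous_const
  · have hn' : (n : ℂ) ≠ 0 := Nat.cast_ne_zero.mpr hn
    simp only [LSeries.term_of_ne_zero hn]
    refine continuous_const.div (.const_cpow (by fun_prop) (.inl hn')) fun t ↦ ?_
    simp [Complex.cpow_eq_zero_iff, hn']

theorem norm_term_add_mul_I (a : ℕ → ℂ) (n : ℕ) (σ t : ℝ) :
    ‖LSeries.term a (σ + t * Complex.I) n‖ = ‖LSeries.term a σ n‖ := by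
  simp [LSeries.norm_term_eq]

variable {a : ℕ → ℂ} {x : ℝ}

theorem mul_rieszKernel_eq_integral (ha : a 0 = 0) (hσ : 0 < σ) (hx : 0 < x) (n : ℕ) :
    a n * (rieszKernel (n / x) : ℂ) = (1 / (2 * Real.pi) : ℝ) • ∫ t : ℝ,
      LSeries.term a (σ + t * Complex.I) n *
        ((x : ℂ) ^ (σ + t * Complex.I) * perronWeight (σ + t * Complex.I)) := by
  obtain rfl | hn := eq_or_ne n 0
  · simp [ha]
  have : (n : ℂ) ≠ 0 := Nat.cast_ne_zero.mpr hn
  have : (x : ℂ) ≠ 0 := Complex.ofReal_ne_zero.mpr hx.ne'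
  rw [rieszKernel_eq_integral hσ (by positivity), mul_smul_comm, ← integral_const_mul]
  congr 2 with t
  rw [Complex.cpow_neg, Complex.ofReal_div, Complex.div_cpow_ofReal_nonneg n.cast_nonneg hx.le,
    inv_div, LSeries.term_of_ne_zero hn, Complex.ofReal_natCast]
  ring

theorem hasSum_mul_rieszKernel (ha : a 0 = 0) (hσ : 0 < σ) (hsum : LSeriesSummable a σ)
    (hx : 0 < x) :
    HasSum (fun n : ℕ ↦ a n * (rieszKernel (n / x) : ℂ))
      ((1 / (2 * Real.pi) : ℝ) • ∫ t : ℝ, LSeries a (σ + t * Complex.I) *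
        ((x : ℂ) ^ (σ + t * Complex.I) * perronWeight (σ + t * Complex.I))) := by
  have hx' : (x : ℂ) ≠ 0 := Complex.ofReal_ne_zero.mpr hx.ne'
  let F (n : ℕ) (t : ℝ) : ℂ := LSeries.term a (σ + t * Complex.I) n *
    ((x : ℂ) ^ (σ + t * Complex.I) * perronWeight (σ + t * Complex.I))
  have hnorm (n : ℕ) (t : ℝ) :
      ‖F n t‖ = ‖LSeries.term a σ n‖ * (x ^ σ * ‖perronWeight (σ + t * Complex.I)‖) := by
    rw [norm_mul, norm_mul, norm_term_add_mul_I, Complex.norm_cpow_eq_rpow_re_of_pos hx]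
    simp
  have hcont (n : ℕ) : Continuous (F n) :=
    (continuous_term_add_mul_I a n σ).mul
      ((Continuous.const_cpow (by fun_prop) (.inl hx')).mul (continuous_perronWeight_add_mul_I hσ))
  have hint (n : ℕ) : Integrable (F n) :=
    (((integrable_perronWeight_add_mul_I hσ).norm.const_mul (x ^ σ)).const_mul _).mono'
      (hcont n).aestronglyMeasurable (.of_forall fun t ↦ (hnorm n t).le)
  have hF : Summable fun n ↦ ∫ t, ‖F n t‖ := by
    simp only [hnorm, integral_const_mul]
    exact hsum.norm.mul_right _
  have h := (hasSum_integral_of_summable_integral_norm hint hF).const_smul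
    (1 / (2 * Real.pi) : ℝ)
  simp only [F, tsum_mul_right, ← mul_rieszKernel_eq_integral ha hσ hx] at h
  exact h

end Perron

section ContourShift

open MeasureTheory Set
open scoped LSeries.notation ArithmeticFunction.vonMangoldt ArithmeticFunction.zeta

theorem norm_integral_vertical_le_of_differentiableOn {f : ℂ → ℂ} {a b T V H : ℝ} (hab : a ≤ b)
    (hT : 0 ≤ T) (hf : DifferentiableOn ℂ f (Icc a b ×ℂ Icc (-T) T))
    (hV : ∀ t : ℝ, |t| ≤ T → ‖f (a + t * Complex.I)‖ ≤ V)
    (hH : ∀ u ∈ Icc a b, ∀ t : ℝ, |t| = T → ‖f (u + t * Complex.I)‖ ≤ H) :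
    ‖∫ t in (-T)..T, f (b + t * Complex.I)‖ ≤ V * (2 * T) + 2 * (H * (b - a)) := by
  have hrect := Complex.integral_boundary_rect_eq_zero_of_differentiableOn f
    (a + (-T : ℝ) * Complex.I) (b + T * Complex.I)
    (by simpa [uIcc_of_le hab, uIcc_of_le (neg_le_self hT)] using hf)
  have hre (u t : ℝ) : (u + t * Complex.I : ℂ).re = u := by simp
  have him (u t : ℝ) : (u + t * Complex.I : ℂ).im = t := by simp
  simp only [hre, him] at hrect
  have hleft : ‖∫ t in (-T)..T, f (a + t * Complex.I)‖ ≤ V * (2 * T) := by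
    refine (intervalIntegral.norm_integral_le_of_norm_le_const fun t ht ↦ hV t ?_).trans_eq ?_
    · rw [uIoc_of_le (neg_le_self hT)] at ht
      exact abs_le.mpr (Ioc_subset_Icc_self ht)
    · rw [sub_neg_eq_add, ← two_mul, abs_of_nonneg (by positivity)]
  have hhoriz (t : ℝ) (ht : |t| = T) : ‖∫ u in a..b, f (u + t * Complex.I)‖ ≤ H * (b - a) := by
    refine (intervalIntegral.norm_integral_le_of_norm_le_const fun u hu ↦ hH u ?_ t ht).trans_eq ?_
    · rw [uIoc_of_le hab] at hu
      exact Ioc_subset_Icc_self hu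
    · rw [abs_of_nonneg (sub_nonneg.mpr hab)]
  calc ‖∫ t in (-T)..T, f (b + t * Complex.I)‖
      = ‖Complex.I • ∫ t in (-T)..T, f (b + t * Complex.I)‖ := by
        rw [norm_smul, Complex.norm_I, one_mul]
    _ = ‖Complex.I • (∫ t in (-T)..T, f (a + t * Complex.I)) +
          (∫ u in a..b, f (u + T * Complex.I)) - ∫ u in a..b, f (u + (-T : ℝ) * Complex.I)‖ := by
        congr 1
        linear_combination hrect
    _ ≤ ‖∫ t in (-T)..T, f (a + t * Complex.I)‖ + ‖∫ u in a..b, f (u + T * Complex.I)‖ +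
          ‖∫ u in a..b, f (u + (-T : ℝ) * Complex.I)‖ := by
        refine (norm_sub_le _ _).trans (add_le_add_left ((norm_add_le _ _).trans_eq ?_) _)
        rw [norm_smul, Complex.norm_I, one_mul]
    _ ≤ V * (2 * T) + H * (b - a) + H * (b - a) := by
        gcongr
        · exact hhoriz T (abs_of_nonneg hT)
        · exact hhoriz (-T) (by rw [abs_neg, abs_of_nonneg hT])
    _ = V * (2 * T) + 2 * (H * (b - a)) := by ring

theorem arctan_le_self {y : ℝ} (hy : 0 ≤ y) : Real.arctan y ≤ y := by
  simpa only [Real.tan_arctan] using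
    Real.le_tan (Real.arctan_nonneg.mpr hy) (Real.arctan_lt_pi_div_two y)

theorem norm_integral_sub_intervalIntegral_le {f : ℝ → ℂ} {Q T : ℝ} (hT : 0 < T)
    (hf : Integrable f) (hQ : 0 ≤ Q) (hb : ∀ t, ‖f t‖ ≤ Q * (1 + t ^ 2)⁻¹) :
    ‖(∫ t, f t) - ∫ t in (-T)..T, f t‖ ≤ 2 * Q / T := by
  have harc : Real.pi / 2 - Real.arctan T ≤ T⁻¹ := by
    simpa only [Real.arctan_inv_of_pos hT] using arctan_le_self (inv_pos.mpr hT).le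
  have htail {S : Set ℝ} (hS : ∫ t in S, (1 + t ^ 2)⁻¹ ≤ T⁻¹) : ‖∫ t in S, f t‖ ≤ Q * T⁻¹ :=
    calc ‖∫ t in S, f t‖ ≤ ∫ t in S, Q * (1 + t ^ 2)⁻¹ :=
          norm_integral_le_of_norm_le (integrable_inv_one_add_sq.const_mul Q).integrableOn
            (.of_forall hb)
      _ ≤ Q * T⁻¹ := by rw [integral_const_mul]; gcongr
  have hsplit : (∫ t, f t) - ∫ t in (-T)..T, f t =
      (∫ t in Iic (-T), f t) + ∫ t in Ioi T, f t := by
    rw [← intervalIntegral.integral_Iic_add_Ioi (b := T) hf.integrableOn hf.integrableOn,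
      ← intervalIntegral.integral_Iic_sub_Iic hf.integrableOn hf.integrableOn]
    ring
  calc ‖(∫ t, f t) - ∫ t in (-T)..T, f t‖
      ≤ ‖∫ t in Iic (-T), f t‖ + ‖∫ t in Ioi T, f t‖ := by rw [hsplit]; exact norm_add_le _ _
    _ ≤ Q * T⁻¹ + Q * T⁻¹ := by
        gcongr
        · exact htail (by rw [integral_Iic_inv_one_add_sq, Real.arctan_neg]; linarith)
        · exact htail (by rw [integral_Ioi_inv_one_add_sq]; exact harc)
    _ = 2 * Q / T := by ring

/-- The arithmetic function `n ↦ Λ n - 1`, whose L-series has no pole at `1`. -/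
noncomputable def vonMangoldtSubOne : ArithmeticFunction ℝ := Λ - (ζ : ArithmeticFunction ℝ)

theorem vonMangoldtSubOne_apply {n : ℕ} (hn : n ≠ 0) : vonMangoldtSubOne n = Λ n - 1 := by
  change Λ n - (ζ n : ℝ) = _
  rw [ArithmeticFunction.zeta_apply_ne hn, Nat.cast_one]

theorem term_vonMangoldtSubOne (s : ℂ) :
    LSeries.term ↗vonMangoldtSubOne s = LSeries.term ↗Λ s - LSeries.term 1 s := by
  ext n
  obtain rfl | hn := eq_or_ne n 0
  · simp
  · simp [LSeries.term_of_ne_zero hn, vonMangoldtSubOne_apply hn, sub_div]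

variable {s : ℂ}

theorem LSeriesHasSum_vonMangoldtSubOne (hs : 1 < s.re) :
    LSeriesHasSum ↗vonMangoldtSubOne s (-logDeriv riemannZeta₁ s - riemannZeta₀ s) := by
  have hs1 : s ≠ 1 := fun h ↦ by simp [h] at hs
  have hΛ : HasSum (LSeries.term ↗Λ s) (1 / (s - 1) - logDeriv riemannZeta₁ s) :=
    LSeries_vonMangoldt_eq_one_div_sub_logDeriv hs ▸
      (ArithmeticFunction.LSeriesSummable_vonMangoldt hs).LSeriesHasSum
  have hone : HasSum (LSeries.term 1 s) (1 / (s - 1) + riemannZeta₀ s) := by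
    rw [one_div, ← riemannZeta_eq_inv_sub_add hs1, ← LSeries_one_eq_riemannZeta hs]
    exact (LSeriesSummable_one_iff.mpr hs).LSeriesHasSum
  rw [LSeriesHasSum, term_vonMangoldtSubOne]
  have hval : -logDeriv riemannZeta₁ s - riemannZeta₀ s =
      1 / (s - 1) - logDeriv riemannZeta₁ s - (1 / (s - 1) + riemannZeta₀ s) := by ring
  exact hval ▸ hΛ.sub hone

theorem norm_LSeries_vonMangoldtSubOne_le {A : ℝ}
    (hA : ∀ σ : ℝ, 1 ≤ σ → σ ≤ 2 → ‖logDeriv riemannZeta₁ σ‖ ≤ A) {ε : ℝ} (hε : 0 < ε)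
    (hε1 : ε ≤ 1) (hs : s.re = 1 + ε) : ‖L ↗vonMangoldtSubOne s‖ ≤ 7 / ε + A := by
  have h1 : 1 < ((1 + ε : ℝ) : ℂ).re := by simpa using hε
  have hΛ := ArithmeticFunction.LSeriesSummable_vonMangoldt h1
  have hone := LSeriesSummable_one_iff.mpr h1
  have hcast : ↗(fun n ↦ Λ n + 1) = ↗Λ + 1 := by ext n; simp
  have h := norm_LSeries_le_norm_LSeries_re (a := fun n ↦ Λ n + 1) (b := ↗vonMangoldtSubOne)
    (s := s) (fun n hn ↦ by
      rw [Complex.norm_real, vonMangoldtSubOne_apply hn, Real.norm_eq_abs, abs_le]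
      constructor <;> linarith [ArithmeticFunction.vonMangoldt_nonneg (n := n)])
    (by rw [hs, hcast]; exact hΛ.add hone)
  have hinv : ‖1 / (((1 + ε : ℝ) : ℂ) - 1)‖ = 1 / ε := by
    rw [Complex.ofReal_add, Complex.ofReal_one, add_sub_cancel_left, norm_div, norm_one,
      Complex.norm_real, Real.norm_of_nonneg hε.le]
  calc ‖L ↗vonMangoldtSubOne s‖ ≤ ‖L ↗Λ (1 + ε : ℝ)‖ + ‖riemannZeta (1 + ε : ℝ)‖ := by
        rw [hs, hcast, LSeries_add hΛ hone, LSeries_one_eq_riemannZeta h1] at h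
        exact h.trans (norm_add_le _ _)
    _ ≤ (1 / ε + A) + 6 / ε := by
        rw [LSeries_vonMangoldt_eq_one_div_sub_logDeriv h1, ← hinv]
        gcongr
        · exact (norm_sub_le _ _).trans (by gcongr; exact hA _ (by linarith) (by linarith))
        · exact norm_riemannZeta_one_add_le hε hε1
    _ = 7 / ε + A := by ring

/-- The integrand of Perron's formula for the Riesz means of `n ↦ Λ n - 1`, continued to the left
of the line `Re s = 1`. -/
noncomputable def perronIntegrand (x : ℝ) (s : ℂ) : ℂ :=
  (-logDeriv riemannZeta₁ s - riemannZeta₀ s) * ((x : ℂ) ^ s * perronWeight s)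

variable {x : ℝ}

theorem differentiableAt_perronIntegrand (hx : 0 < x) (hs : 0 < s.re) (hζ : riemannZeta₁ s ≠ 0) :
    DifferentiableAt ℂ (perronIntegrand x) s := by
  have hlog : DifferentiableAt ℂ (logDeriv riemannZeta₁) s :=
    ((differentiable_riemannZeta₁.contDiff (n := 2)).differentiable_deriv_two s).div
      (differentiable_riemannZeta₁ s) hζ
  exact (hlog.neg.sub (differentiable_riemannZeta₀ s)).mul
    ((differentiableAt_id.const_cpow (.inl (Complex.ofReal_ne_zero.mpr hx.ne'))).mul
      (differentiableAt_perronWeight hs))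

theorem continuous_perronIntegrand_add_mul_I {σ : ℝ} (hx : 0 < x) (hσ : 1 ≤ σ) :
    Continuous fun t : ℝ ↦ perronIntegrand x (σ + t * Complex.I) :=
  continuous_iff_continuousAt.mpr fun t ↦
    have hre : (σ + t * Complex.I : ℂ).re = σ := by simp
    (differentiableAt_perronIntegrand hx (by rw [hre]; linarith)
      (riemannZeta₁_ne_zero_of_one_le_re (by rwa [hre]))).continuousAt.comp
        (f := fun t : ℝ ↦ (σ + t * Complex.I : ℂ)) (by fun_prop)

theorem norm_perronIntegrand_le {D M : ℝ} (hx : 0 < x) (hs : 1 / 2 ≤ s.re)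
    (hD : ‖logDeriv riemannZeta₁ s‖ ≤ D) (hM : 0 < M) (hMs : M ≤ ‖s‖) :
    ‖perronIntegrand x s‖ ≤ x ^ s.re * ((D + 1) / M ^ 2 + 2 / M) := by
  have hD0 : 0 ≤ D := (norm_nonneg _).trans hD
  have hs0 : 0 < ‖s‖ := hM.trans_le hMs
  have hζ : ‖-logDeriv riemannZeta₁ s - riemannZeta₀ s‖ ≤ D + (1 + 2 * ‖s‖) := by
    refine (norm_sub_le _ _).trans ?_
    rw [norm_neg]
    gcongr
    exact norm_riemannZeta₀_le hs
  have hw : ‖perronWeight s‖ ≤ (‖s‖ ^ 2)⁻¹ := by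
    refine (norm_perronWeight_le (by linarith)).trans_eq ?_
    rw [Complex.sq_norm, Complex.normSq_apply, ← sq, ← sq]
  calc ‖perronIntegrand x s‖ ≤ (D + (1 + 2 * ‖s‖)) * (x ^ s.re * (‖s‖ ^ 2)⁻¹) := by
        rw [perronIntegrand, norm_mul, norm_mul, Complex.norm_cpow_eq_rpow_re_of_pos hx]
        gcongr
    _ = x ^ s.re * ((D + 1) / ‖s‖ ^ 2 + 2 / ‖s‖) := by field_simp; ring
    _ ≤ x ^ s.re * ((D + 1) / M ^ 2 + 2 / M) := by gcongr

variable {T η D σ : ℝ}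

theorem norm_intervalIntegral_perronIntegrand_le (hx : 1 ≤ x) (hT : 1 ≤ T) (hη : η ≤ 1 / 8)
    (hησ : 1 - η ≤ σ) (hσ : σ ≤ 1 + 3 * η)
    (hreg : ∀ s : ℂ, |s.im| ≤ T → 1 - η ≤ s.re → s.re ≤ 1 + 3 * η →
      riemannZeta₁ s ≠ 0 ∧ ‖logDeriv riemannZeta₁ s‖ ≤ D) :
    ‖∫ t in (-T)..T, perronIntegrand x (σ + t * Complex.I)‖ ≤
      x ^ (1 - η) * (4 * D + 8) * (2 * T) + 2 * (x ^ σ * ((D + 3) / T)) := by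
  have hx0 : 0 < x := by linarith
  have hre (u t : ℝ) : (u + t * Complex.I : ℂ).re = u := by simp
  have him (u t : ℝ) : (u + t * Complex.I : ℂ).im = t := by simp
  have hregion (u t : ℝ) (hu : u ∈ Icc (1 - η) σ) (ht : |t| ≤ T) :=
    hreg (u + t * Complex.I) (by rwa [him]) (by rw [hre]; exact hu.1)
      (by rw [hre]; linarith [hu.2])
  have hD0 : 0 ≤ D := (norm_nonneg _).trans
    (hregion σ 0 ⟨hησ, le_rfl⟩ (by rw [abs_zero]; linarith)).2
  refine (norm_integral_vertical_le_of_differentiableOn (V := x ^ (1 - η) * (4 * D + 8))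
    (H := x ^ σ * ((D + 3) / T)) hησ (by linarith) (fun s hs ↦ ?_) (fun t ht ↦ ?_)
    (fun u hu t ht ↦ ?_)).trans ?_
  · obtain ⟨hs1, hs2⟩ := Complex.mem_reProdIm.mp hs
    exact (differentiableAt_perronIntegrand hx0 (by linarith [hs1.1])
      (hreg s (abs_le.mpr hs2) hs1.1 (hs1.2.trans hσ)).1).differentiableWithinAt
  · have h := norm_perronIntegrand_le (M := 1 / 2) hx0 (by rw [hre]; linarith)
      (hregion (1 - η) t ⟨le_rfl, hησ⟩ ht).2 (by norm_num)
      ((Complex.re_le_norm _).trans' (by rw [hre]; linarith))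
    rw [hre] at h
    exact h.trans_eq (by ring)
  · have h := norm_perronIntegrand_le (M := T) hx0 (by rw [hre]; linarith [hu.1])
      (hregion u t hu ht.le).2 (by linarith) ((Complex.abs_im_le_norm _).trans' (by rw [him, ht]))
    rw [hre] at h
    refine h.trans (mul_le_mul (Real.rpow_le_rpow_of_exponent_le hx hu.2) ?_ (by positivity)
      (by positivity))
    have : (D + 1) / T ^ 2 ≤ (D + 1) / T := by
      gcongr
      exact le_self_pow₀ hT two_ne_zero
    exact (add_le_add_left this _).trans_eq (by ring)
  · have hwidth := mul_le_of_le_one_right (a := x ^ σ * ((D + 3) / T)) (b := σ - (1 - η))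
      (by positivity) (by linarith)
    linarith

theorem norm_integral_perronIntegrand_le {B : ℝ} (hx : 1 ≤ x) (hT : 1 ≤ T) (hη : η ≤ 1 / 8)
    (hσ1 : 1 < σ) (hσ : σ ≤ 1 + 3 * η)
    (hreg : ∀ s : ℂ, |s.im| ≤ T → 1 - η ≤ s.re → s.re ≤ 1 + 3 * η →
      riemannZeta₁ s ≠ 0 ∧ ‖logDeriv riemannZeta₁ s‖ ≤ D)
    (hB : ∀ t : ℝ, ‖L ↗vonMangoldtSubOne (σ + t * Complex.I)‖ ≤ B) :
    ‖∫ t : ℝ, perronIntegrand x (σ + t * Complex.I)‖ ≤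
      x ^ (1 - η) * (4 * D + 8) * (2 * T) + 2 * (x ^ σ * ((D + 3 + B) / T)) := by
  have hx0 : 0 < x := by linarith
  have hB0 : 0 ≤ B := (norm_nonneg _).trans (hB 0)
  have hbound (t : ℝ) :
      ‖perronIntegrand x (σ + t * Complex.I)‖ ≤ x ^ σ * B * (1 + t ^ 2)⁻¹ := by
    have hre : (σ + t * Complex.I : ℂ).re = σ := by simp
    have him : (σ + t * Complex.I : ℂ).im = t := by simp
    have hw : ‖perronWeight (σ + t * Complex.I)‖ ≤ (1 + t ^ 2)⁻¹ := by
      refine (norm_perronWeight_le (by rw [hre]; linarith)).trans ?_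
      rw [hre, him]
      gcongr
      exact one_le_pow₀ hσ1.le
    calc ‖perronIntegrand x (σ + t * Complex.I)‖
        = ‖L ↗vonMangoldtSubOne (σ + t * Complex.I)‖ *
            (x ^ σ * ‖perronWeight (σ + t * Complex.I)‖) := by
          rw [perronIntegrand, ← (LSeriesHasSum_vonMangoldtSubOne (by rwa [hre])).LSeries_eq,
            norm_mul, norm_mul, Complex.norm_cpow_eq_rpow_re_of_pos hx0, hre]
      _ ≤ B * (x ^ σ * (1 + t ^ 2)⁻¹) := by gcongr; exact hB t
      _ = x ^ σ * B * (1 + t ^ 2)⁻¹ := by ring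
  have hint : Integrable fun t : ℝ ↦ perronIntegrand x (σ + t * Complex.I) :=
    (integrable_inv_one_add_sq.const_mul _).mono'
      (continuous_perronIntegrand_add_mul_I hx0 hσ1.le).aestronglyMeasurable (.of_forall hbound)
  have htail := norm_integral_sub_intervalIntegral_le (by linarith : 0 < T) hint (by positivity)
    hbound
  have hrect := norm_intervalIntegral_perronIntegrand_le hx hT hη (by linarith) hσ hreg
  have hsplit : 2 * (x ^ σ * ((D + 3) / T)) + 2 * (x ^ σ * B) / T =
      2 * (x ^ σ * ((D + 3 + B) / T)) := by ring
  linarith [norm_le_norm_add_norm_sub' (∫ t : ℝ, perronIntegrand x (σ + t * Complex.I))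
    (∫ t in (-T)..T, perronIntegrand x (σ + t * Complex.I))]

theorem norm_tsum_vonMangoldtSubOne_mul_rieszKernel_le (hx : 0 < x) (hσ : 1 < σ) :
    ‖∑' n : ℕ, (vonMangoldtSubOne n : ℂ) * (rieszKernel (n / x) : ℂ)‖ ≤
      ‖∫ t : ℝ, perronIntegrand x (σ + t * Complex.I)‖ := by
  have hre (t : ℝ) : (σ + t * Complex.I : ℂ).re = σ := by simp
  have hpi : ‖(1 / (2 * Real.pi) : ℝ)‖ ≤ 1 := by
    rw [Real.norm_of_nonneg (by positivity), div_le_one (by positivity)]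
    linarith [Real.pi_gt_three]
  have h := (hasSum_mul_rieszKernel (a := ↗vonMangoldtSubOne) (σ := σ) (by simp) (by linarith)
    (LSeriesHasSum_vonMangoldtSubOne (by simpa using hσ)).LSeriesSummable hx).tsum_eq
  have hcongr (t : ℝ) : L ↗vonMangoldtSubOne (σ + t * Complex.I) *
      ((x : ℂ) ^ (σ + t * Complex.I : ℂ) * perronWeight (σ + t * Complex.I)) =
        perronIntegrand x (σ + t * Complex.I) := by
    rw [(LSeriesHasSum_vonMangoldtSubOne (by rwa [hre])).LSeries_eq, perronIntegrand]
  simp only [hcongr] at h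
  rw [h, norm_smul]
  exact mul_le_of_le_one_left (norm_nonneg _) hpi

end ContourShift

section PNTError

open MeasureTheory Set

/-- The size `x exp (-c √(log x))` of the error term in the prime number theorem of
de la Vallée Poussin. -/
noncomputable def pntError (c x : ℝ) : ℝ := x * Real.exp (-c * √(Real.log x))

variable {c x : ℝ}

theorem pntError_pos (hx : 0 < x) : 0 < pntError c x := mul_pos hx (Real.exp_pos _)

theorem pntError_eq_exp (hx : 1 ≤ x) :
    pntError c x = Real.exp (√(Real.log x) ^ 2 - c * √(Real.log x)) := by
  rw [pntError, Real.sq_sqrt (Real.log_nonneg hx), sub_eq_add_neg, Real.exp_add,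
    Real.exp_log (by linarith), neg_mul]

theorem one_le_mul_pntError (hx : 1 ≤ x) : 1 ≤ Real.exp (c ^ 2 / 4) * pntError c x := by
  rw [pntError_eq_exp hx, ← Real.exp_add, Real.one_le_exp_iff]
  nlinarith [sq_nonneg (√(Real.log x) - c / 2)]

theorem sqrt_eq_exp_sqrt_log_sq (hx : 1 ≤ x) : √x = Real.exp (√(Real.log x) ^ 2 / 2) := by
  rw [Real.sq_sqrt (Real.log_nonneg hx), Real.sqrt_eq_rpow, Real.rpow_def_of_pos (by linarith),
    mul_one_div]

theorem sqrt_le_mul_pntError (hx : 1 ≤ x) : √x ≤ Real.exp (c ^ 2 / 2) * pntError c x := by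
  rw [pntError_eq_exp hx, sqrt_eq_exp_sqrt_log_sq hx, ← Real.exp_add, Real.exp_le_exp]
  linarith [sq_nonneg (√(Real.log x) - c)]

theorem continuousOn_exp_neg_mul_sqrt_log (c : ℝ) :
    ContinuousOn (fun t ↦ Real.exp (-c * √(Real.log t))) (Ioi 0) := by
  have hlog : ContinuousOn Real.log (Ioi 0) :=
    Real.continuousOn_log.mono fun t (ht : 0 < t) ↦ ht.ne'
  fun_prop

theorem sqrt_mul_exp_neg_mul_sqrt_log_le {t : ℝ} (hc : 0 ≤ c) (ht : 1 ≤ t) (htx : t ≤ x) :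
    √t * Real.exp (-c * √(Real.log t)) ≤
      Real.exp (c ^ 2 / 2) * (√x * Real.exp (-c * √(Real.log x))) := by
  have hlog : √(Real.log t) ≤ √(Real.log x) :=
    Real.sqrt_le_sqrt (Real.log_le_log (by linarith) htx)
  have hz := Real.sqrt_nonneg (Real.log t)
  rw [sqrt_eq_exp_sqrt_log_sq ht, sqrt_eq_exp_sqrt_log_sq (ht.trans htx), ← Real.exp_add,
    ← Real.exp_add, ← Real.exp_add, Real.exp_le_exp]
  set y := √(Real.log x)
  set z := √(Real.log t)
  rcases le_total z c with hzc | hzc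
  · nlinarith [sq_nonneg (y - c)]
  · nlinarith

theorem pntError_le_mul_pntError {t : ℝ} (hc : 0 ≤ c) (ht : 1 ≤ t) (htx : t ≤ x) :
    pntError c t ≤ Real.exp (c ^ 2 / 2) * pntError c x := by
  have hmul {z : ℝ} (hz : 1 ≤ z) : √z * (√z * Real.exp (-c * √(Real.log z))) = pntError c z := by
    rw [← mul_assoc, Real.mul_self_sqrt (by linarith), pntError]
  rw [← hmul ht, ← hmul (ht.trans htx), mul_left_comm (Real.exp _)]
  exact mul_le_mul (Real.sqrt_le_sqrt htx) (sqrt_mul_exp_neg_mul_sqrt_log_le hc ht htx)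
    (by positivity) (Real.sqrt_nonneg x)

theorem mul_pntError_le_four_mul_sq {t : ℝ} (hc : 0 ≤ c) (hx : 4 ≤ x) (hxt : x / 2 ≤ t)
    (htx : t ≤ 2 * x) : t * pntError c t ≤ 4 * pntError (c / 4) x ^ 2 := by
  have hlog : √(Real.log x) / 2 ≤ √(Real.log t) := by
    have h4 : 2 * Real.log 2 ≤ Real.log x := by
      rw [← Real.log_rpow two_pos]
      exact Real.log_le_log (by norm_num) (by norm_num; exact hx)
    have hlogx : Real.log (x / 2) ≤ Real.log t := Real.log_le_log (by linarith) hxt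
    rw [Real.log_div (by linarith) two_ne_zero] at hlogx
    refine Real.le_sqrt_of_sq_le ?_
    rw [div_pow, Real.sq_sqrt (Real.log_nonneg (by linarith))]
    linarith [Real.log_pos one_lt_two]
  have hexp : Real.exp (-c * √(Real.log t)) ≤ Real.exp (-(c / 4) * √(Real.log x)) ^ 2 := by
    rw [← Real.exp_nat_mul, Real.exp_le_exp]
    push_cast
    nlinarith
  have ht : 0 ≤ t := by linarith
  calc t * pntError c t = t ^ 2 * Real.exp (-c * √(Real.log t)) := by rw [pntError]; ring
    _ ≤ (2 * x) ^ 2 * Real.exp (-(c / 4) * √(Real.log x)) ^ 2 := by gcongr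
    _ = 4 * pntError (c / 4) x ^ 2 := by rw [pntError]; ring

theorem integral_le_of_sqrt_mul_le {f : ℝ → ℝ} {a K : ℝ} (ha : 0 < a) (hax : a ≤ x) (hK : 0 ≤ K)
    (hf : IntervalIntegrable f volume a x) (h : ∀ t ∈ Icc a x, √t * f t ≤ K) :
    ∫ t in a..x, f t ≤ 2 * K * √x := by
  have hpos {t : ℝ} (ht : t ∈ uIcc a x) : 0 < t := by
    rw [uIcc_of_le hax] at ht
    linarith [ht.1]
  have hcont : ContinuousOn (fun t : ℝ ↦ 1 / (2 * √t)) (uIcc a x) :=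
    continuousOn_const.div (by fun_prop) fun t ht ↦
      (mul_pos two_pos (Real.sqrt_pos.mpr (hpos ht))).ne'
  have hint : ∫ t in a..x, 1 / (2 * √t) = √x - √a :=
    intervalIntegral.integral_eq_sub_of_hasDerivAt
      (fun t ht ↦ Real.hasDerivAt_sqrt (hpos ht).ne') hcont.intervalIntegrable
  calc ∫ t in a..x, f t ≤ ∫ t in a..x, 2 * K * (1 / (2 * √t)) := by
        refine intervalIntegral.integral_mono_on hax hf (hcont.intervalIntegrable.const_mul _)
          fun t ht ↦ ?_
        have hsqrt : 0 < √t := Real.sqrt_pos.mpr (ha.trans_le ht.1)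
        have : 2 * K * (1 / (2 * √t)) = K / √t := by field_simp
        rw [this, le_div_iff₀' hsqrt]
        exact h t ht
    _ = 2 * K * (√x - √a) := by rw [intervalIntegral.integral_const_mul, hint]
    _ ≤ 2 * K * √x := by
        gcongr
        linarith [Real.sqrt_nonneg a]

theorem integral_exp_neg_mul_sqrt_log_le {a : ℝ} (hc : 0 ≤ c) (ha : 1 ≤ a) (hax : a ≤ x) :
    ∫ t in a..x, Real.exp (-c * √(Real.log t)) ≤ 2 * Real.exp (c ^ 2 / 2) * pntError c x := by
  have hcont : ContinuousOn (fun t ↦ Real.exp (-c * √(Real.log t))) (uIcc a x) := by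
    rw [uIcc_of_le hax]
    exact (continuousOn_exp_neg_mul_sqrt_log c).mono fun t ht ↦ by
      have := ht.1
      simp only [mem_Ioi]
      linarith
  refine (integral_le_of_sqrt_mul_le (by linarith) hax (by positivity) hcont.intervalIntegrable
    fun t ht ↦ sqrt_mul_exp_neg_mul_sqrt_log_le hc (ha.trans ht.1) ht.2).trans_eq ?_
  rw [pntError]
  linear_combination 2 * Real.exp (c ^ 2 / 2) * Real.exp (-c * √(Real.log x)) *
    Real.mul_self_sqrt (by linarith : 0 ≤ x)

end PNTError

section SmoothedSum

open MeasureTheory Set Filter Asymptotics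

theorem exists_norm_logDeriv_riemannZeta₁_le_sq : ∃ c A : ℝ, 0 < c ∧ c ≤ 1 / 8 ∧ 0 < A ∧
    ∀ y : ℝ, 2 ≤ c * y → ∀ s : ℂ, |s.im| ≤ Real.exp (c * y) → 1 - 1 / (2 * y) ≤ s.re →
      s.re ≤ 1 + 3 * (1 / (2 * y)) →
        riemannZeta₁ s ≠ 0 ∧ ‖logDeriv riemannZeta₁ s‖ ≤ A * y ^ 2 := by
  obtain ⟨c, A, hc, hc8, hA, hreg⟩ := exists_norm_logDeriv_riemannZeta₁_le_log_sq
  refine ⟨c, A, hc, hc8, hA, fun y hy s him hre hre' ↦ ?_⟩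
  have hy0 : 0 < y := by nlinarith
  have hE := Real.add_one_le_exp (c * y)
  have hL0 : 0 < Real.log (Real.exp (c * y) + 4) := Real.log_pos (by linarith)
  have hL : Real.log (Real.exp (c * y) + 4) ≤ 2 * (c * y) := by
    rw [Real.log_le_iff_le_exp (by positivity), two_mul, Real.exp_add]
    nlinarith
  have hη : 1 / (2 * y) ≤ c / Real.log (Real.exp (c * y) + 4) := by
    rw [div_le_div_iff₀ (by positivity) hL0]
    linarith
  obtain ⟨hne, hD⟩ := hreg (Real.exp (c * y)) s him (by linarith) (by linarith)
  refine ⟨hne, hD.trans ?_⟩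
  gcongr
  nlinarith

theorem sq_mul_exp_neg_le {c : ℝ} (hc : 0 < c) {y : ℝ} (hy : 0 ≤ y) :
    y ^ 2 * Real.exp (-(c * y)) ≤ 8 / c ^ 2 * Real.exp (-(c / 2) * y) := by
  have hquad := Real.quadratic_le_exp_of_nonneg (x := c / 2 * y) (by positivity)
  have hsq : y ^ 2 ≤ 8 / c ^ 2 * Real.exp (c / 2 * y) := by
    rw [div_mul_eq_mul_div, le_div_iff₀ (by positivity)]
    nlinarith [mul_nonneg hc.le hy]
  calc y ^ 2 * Real.exp (-(c * y)) ≤ 8 / c ^ 2 * Real.exp (c / 2 * y) * Real.exp (-(c * y)) := by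
        gcongr
    _ = 8 / c ^ 2 * Real.exp (-(c / 2) * y) := by
        rw [mul_assoc, ← Real.exp_add]
        ring_nf

theorem exp_rpow_one_add_one_div_le {a : ℝ} (ha : a ≠ 0) :
    Real.exp a ^ (1 + 1 / a) ≤ 3 * Real.exp a := by
  rw [← Real.exp_mul, mul_add, mul_one, mul_one_div_cancel ha, Real.exp_add, mul_comm]
  gcongr
  exact Real.exp_one_lt_d9.le.trans (by norm_num)

theorem exists_norm_tsum_vonMangoldtSubOne_mul_rieszKernel_exp_le : ∃ c C : ℝ, 0 < c ∧ 0 < C ∧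
    ∀ y : ℝ, 2 ≤ c * y →
      ‖∑' n : ℕ, (vonMangoldtSubOne n : ℂ) * (rieszKernel (n / Real.exp (y ^ 2)) : ℂ)‖ ≤
        C * (y ^ 2 * Real.exp (-(c * y))) * Real.exp (y ^ 2) := by
  obtain ⟨c, A, hc, hc8, hA, hreg⟩ := exists_norm_logDeriv_riemannZeta₁_le_sq
  obtain ⟨A', hA', hlogDeriv⟩ := exists_norm_logDeriv_riemannZeta₁_le
  refine ⟨c, 14 * A + 76 + 6 * A', hc, by positivity, fun y hy ↦ ?_⟩
  have hy16 : 16 ≤ y := by nlinarith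
  have hsq : 1 ≤ y ^ 2 := by nlinarith
  have hη : 1 / (2 * y) ≤ 1 / 8 := by gcongr; linarith
  have hε1 : 1 / y ^ 2 ≤ 1 := (div_le_one (by positivity)).mpr hsq
  have hε : 1 / y ^ 2 ≤ 3 * (1 / (2 * y)) := by
    rw [mul_one_div, div_le_div_iff₀ (by positivity) (by positivity)]
    nlinarith
  have hε0 : 0 < 1 / y ^ 2 := by positivity
  have hx : 1 ≤ Real.exp (y ^ 2) := Real.one_le_exp (by positivity)
  have hint := norm_integral_perronIntegrand_le (σ := 1 + 1 / y ^ 2) (B := 7 * y ^ 2 + A')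
    (D := A * y ^ 2) hx (Real.one_le_exp (by positivity : 0 ≤ c * y)) hη (by linarith) (by linarith)
    (hreg y hy) (fun t ↦ (norm_LSeries_vonMangoldtSubOne_le hlogDeriv hε0 hε1
      (by rw [Complex.add_re, Complex.re_ofReal_mul, Complex.I_re, mul_zero, add_zero,
        Complex.ofReal_re])).trans_eq (by field_simp))
  have hleft : Real.exp (y ^ 2) ^ (1 - 1 / (2 * y)) * Real.exp (c * y) ≤
      Real.exp (y ^ 2) * Real.exp (-(c * y)) := by
    rw [← Real.exp_mul, ← Real.exp_add, ← Real.exp_add, Real.exp_le_exp]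
    have : y ^ 2 * (1 - 1 / (2 * y)) = y ^ 2 - y / 2 := by field_simp
    nlinarith
  have hright : Real.exp (y ^ 2) ^ (1 + 1 / y ^ 2) ≤ 3 * Real.exp (y ^ 2) :=
    exp_rpow_one_add_one_div_le (by positivity)
  set x := Real.exp (y ^ 2)
  calc ‖∑' n : ℕ, (vonMangoldtSubOne n : ℂ) * (rieszKernel (n / x) : ℂ)‖
      ≤ x ^ (1 - 1 / (2 * y)) * (4 * (A * y ^ 2) + 8) * (2 * Real.exp (c * y)) +
          2 * (x ^ (1 + 1 / y ^ 2) * ((A * y ^ 2 + 3 + (7 * y ^ 2 + A')) / Real.exp (c * y))) :=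
        (norm_tsum_vonMangoldtSubOne_mul_rieszKernel_le (by positivity) (by linarith)).trans hint
    _ = x ^ (1 - 1 / (2 * y)) * Real.exp (c * y) * (2 * (4 * A * y ^ 2 + 8)) +
          2 * (x ^ (1 + 1 / y ^ 2) * ((A + 7) * y ^ 2 + 3 + A') * Real.exp (-(c * y))) := by
        rw [Real.exp_neg]
        ring
    _ ≤ x * Real.exp (-(c * y)) * (2 * (4 * A * y ^ 2 + 8 * y ^ 2)) +
          2 * (3 * x * ((A + 7) * y ^ 2 + 3 * y ^ 2 + A' * y ^ 2) * Real.exp (-(c * y))) := by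
        gcongr <;> nlinarith
    _ = (14 * A + 76 + 6 * A') * (y ^ 2 * Real.exp (-(c * y))) * x := by ring

theorem tsum_mul_rieszKernel {x : ℝ} (hx : 0 < x) {a : ℕ → ℝ} :
    x * ∑' n : ℕ, a n * rieszKernel (n / x) = ∑ n ∈ Finset.Icc 0 ⌊x⌋₊, (x - n) * a n := by
  rw [tsum_eq_sum (s := Finset.Icc 0 ⌊x⌋₊), Finset.mul_sum]
  · refine Finset.sum_congr rfl fun n hn ↦ ?_
    have hnx : (n : ℝ) ≤ x := (Nat.le_floor_iff hx.le).mp (Finset.mem_Icc.mp hn).2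
    rw [rieszKernel, max_eq_right (sub_nonneg.mpr ((div_le_one hx).mpr hnx))]
    field_simp
  · intro n hn
    have hxn : x < n := by simpa [Nat.le_floor_iff hx.le] using hn
    rw [rieszKernel_of_one_le ((one_le_div hx).mpr hxn.le), mul_zero]

theorem sum_sub_mul_eq_integral {x : ℝ} (a : ℕ → ℝ) (hx : 0 ≤ x) :
    ∑ n ∈ Finset.Icc 0 ⌊x⌋₊, (x - n) * a n =
      ∫ t in (0 : ℝ)..x, ∑ n ∈ Finset.Icc 0 ⌊t⌋₊, a n := by
  have hderiv : deriv (fun t : ℝ ↦ x - t) = fun _ ↦ -1 := by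
    ext t
    simp
  have h := sum_mul_eq_sub_integral_mul a (f := fun t ↦ x - t) hx (fun t _ ↦ by fun_prop)
    (by rw [hderiv]; exact integrableOn_const (by simp))
  rw [h, hderiv, intervalIntegral.integral_of_le hx, sub_self, zero_mul, zero_sub, ← integral_neg]
  simp

theorem sum_vonMangoldtSubOne (t : ℝ) :
    ∑ n ∈ Finset.Icc 0 ⌊t⌋₊, vonMangoldtSubOne n = Chebyshev.psi t - ⌊t⌋₊ := by
  have hIoc : ∑ n ∈ Finset.Icc 0 ⌊t⌋₊, vonMangoldtSubOne n =
      ∑ n ∈ Finset.Ioc 0 ⌊t⌋₊, vonMangoldtSubOne n := by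
    rw [← Finset.add_sum_Ioc_eq_sum_Icc (Nat.zero_le _), ArithmeticFunction.map_zero, zero_add]
  rw [hIoc, Finset.sum_congr rfl fun n hn ↦
    vonMangoldtSubOne_apply (Finset.mem_Ioc.mp hn).1.ne', Finset.sum_sub_distrib, Chebyshev.psi]
  simp

theorem abs_integral_psi_sub_id_le {x : ℝ} (hx : 0 < x) :
    |∫ t in (0 : ℝ)..x, (Chebyshev.psi t - t)| ≤
      x * ‖∑' n : ℕ, (vonMangoldtSubOne n : ℂ) * (rieszKernel (n / x) : ℂ)‖ + x := by
  have hfloor : Monotone fun t : ℝ ↦ (⌊t⌋₊ : ℝ) := Nat.mono_cast.comp Nat.floor_mono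
  have hψ : IntervalIntegrable Chebyshev.psi volume 0 x := Chebyshev.psi_mono.intervalIntegrable
  have hfract : |∫ t in (0 : ℝ)..x, ((⌊t⌋₊ : ℝ) - t)| ≤ x := by
    rw [← Real.norm_eq_abs]
    refine (intervalIntegral.norm_integral_le_of_norm_le_const (C := 1) fun t ht ↦ ?_).trans_eq ?_
    · rw [uIoc_of_le hx.le] at ht
      rw [Real.norm_eq_abs, abs_le]
      constructor <;> linarith [Nat.floor_le ht.1.le, Nat.lt_floor_add_one t]
    · rw [sub_zero, abs_of_pos hx, one_mul]
  have hsmooth : ∫ t in (0 : ℝ)..x, (Chebyshev.psi t - ⌊t⌋₊) =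
      x * ∑' n : ℕ, vonMangoldtSubOne n * rieszKernel (n / x) := by
    simp only [tsum_mul_rieszKernel hx, sum_sub_mul_eq_integral _ hx.le, sum_vonMangoldtSubOne]
  have hsplit : ∫ t in (0 : ℝ)..x, (Chebyshev.psi t - t) =
      x * ∑' n : ℕ, vonMangoldtSubOne n * rieszKernel (n / x) +
        ∫ t in (0 : ℝ)..x, ((⌊t⌋₊ : ℝ) - t) := by
    rw [← hsmooth, ← intervalIntegral.integral_add (hψ.sub hfloor.intervalIntegrable)
      (hfloor.intervalIntegrable.sub intervalIntegral.intervalIntegrable_id)]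
    simp
  rw [hsplit]
  refine (abs_add_le _ _).trans (add_le_add ?_ hfract)
  rw [abs_mul, abs_of_pos hx, ← Real.norm_eq_abs, ← Complex.norm_real, Complex.ofReal_tsum]
  simp

theorem exists_integral_psi_sub_id_isBigO : ∃ c : ℝ, 0 < c ∧
    (fun x ↦ ∫ t in (0 : ℝ)..x, (Chebyshev.psi t - t)) =O[atTop] fun x ↦ x * pntError c x := by
  obtain ⟨c, C, hc, hC, h⟩ := exists_norm_tsum_vonMangoldtSubOne_mul_rieszKernel_exp_le
  refine ⟨c / 2, half_pos hc,
    IsBigO.of_bound (C * (8 / c ^ 2) + Real.exp ((c / 2) ^ 2 / 4)) ?_⟩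
  filter_upwards [eventually_ge_atTop (Real.exp ((2 / c) ^ 2))] with x hx
  have hx1 : 1 ≤ x := (Real.one_le_exp (by positivity)).trans hx
  have hx0 : 0 < x := by linarith
  have hlog : Real.exp (√(Real.log x) ^ 2) = x := by
    rw [Real.sq_sqrt (Real.log_nonneg hx1), Real.exp_log hx0]
  have hy : 2 ≤ c * √(Real.log x) := by
    rw [← div_le_iff₀' hc]
    exact Real.le_sqrt_of_sq_le ((Real.le_log_iff_exp_le hx0).mpr hx)
  have hsum := h _ hy
  rw [hlog] at hsum
  rw [Real.norm_eq_abs, Real.norm_of_nonneg (mul_pos hx0 (pntError_pos hx0)).le]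
  calc |∫ t in (0 : ℝ)..x, (Chebyshev.psi t - t)|
      ≤ x * (C * (8 / c ^ 2 * Real.exp (-(c / 2) * √(Real.log x))) * x) +
          x * (Real.exp ((c / 2) ^ 2 / 4) * pntError (c / 2) x) := by
        refine (abs_integral_psi_sub_id_le hx0).trans ?_
        gcongr
        · exact hsum.trans (mul_le_mul_of_nonneg_right (mul_le_mul_of_nonneg_left
            (sq_mul_exp_neg_le hc (Real.sqrt_nonneg _)) hC.le) hx0.le)
        · exact le_mul_of_one_le_right hx0.le (one_le_mul_pntError hx1)
    _ = (C * (8 / c ^ 2) + Real.exp ((c / 2) ^ 2 / 4)) * (x * pntError (c / 2) x) := by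
        rw [pntError]
        ring

end SmoothedSum

section LogarithmicIntegral

open MeasureTheory Set

theorem half_le_log {t : ℝ} (ht : 2 ≤ t) : 1 / 2 ≤ Real.log t := by
  linarith [Real.log_two_gt_d9, Real.log_le_log two_pos ht]

theorem continuousOn_one_div_log : ContinuousOn (fun t : ℝ ↦ 1 / Real.log t) (Ioi 1) :=
  continuousOn_const.div (Real.continuousOn_log.mono fun _ ht ↦ (one_pos.trans ht).ne')
    fun _ ht ↦ (Real.log_pos ht).ne'

theorem intervalIntegrable_one_div_log {a b : ℝ} (ha : 1 < a) (hb : 1 < b) :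
    IntervalIntegrable (fun t ↦ 1 / Real.log t) volume a b :=
  (continuousOn_one_div_log.mono fun _ ht ↦ (lt_min ha hb).trans_le ht.1).intervalIntegrable

theorem Li_two : Li 2 = 0 := intervalIntegral.integral_same

theorem hasDerivAt_Li {x : ℝ} (hx : 1 < x) : HasDerivAt Li (1 / Real.log x) x :=
  intervalIntegral.integral_hasDerivAt_right (intervalIntegrable_one_div_log one_lt_two hx)
    (by fun_prop : Measurable fun t ↦ 1 / Real.log t).stronglyMeasurable.stronglyMeasurableAtFilter
    (continuousOn_one_div_log.continuousAt (Ioi_mem_nhds hx))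

theorem Li_nonneg {x : ℝ} (hx : 2 ≤ x) : 0 ≤ Li x :=
  intervalIntegral.integral_nonneg hx fun t ht ↦
    one_div_nonneg.mpr (Real.log_nonneg (by linarith [ht.1]))

theorem sqrt_div_log_le {t x : ℝ} (ht : 2 ≤ t) (htx : t ≤ x) :
    √t * (1 / Real.log t) ≤ 4 * √x / Real.log x := by
  have hlogt := half_le_log ht
  have hlogx := half_le_log (ht.trans htx)
  have hst : 0 < √t := Real.sqrt_pos.mpr (by linarith)
  have hlog : Real.log x - Real.log t ≤ 2 * (√x / √t - 1) := by
    have := Real.log_le_sub_one_of_pos (div_pos (Real.sqrt_pos.mpr (by linarith : 0 < x)) hst)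
    rw [Real.log_div (Real.sqrt_pos.mpr (by linarith)).ne' hst.ne',
      Real.log_sqrt (by linarith), Real.log_sqrt (by linarith)] at this
    linarith
  have hratio : 1 ≤ √x / √t := (one_le_div hst).mpr (Real.sqrt_le_sqrt htx)
  have hmul : Real.log x ≤ 4 * (√x / √t) * Real.log t := by nlinarith
  rw [mul_one_div, div_le_div_iff₀ (by linarith) (by linarith)]
  calc √t * Real.log x ≤ √t * (4 * (√x / √t) * Real.log t) := by gcongr
    _ = 4 * √x * Real.log t := by field_simp

theorem Li_le {x : ℝ} (hx : 2 ≤ x) : Li x ≤ 8 * (x / Real.log x) := by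
  have hlog := half_le_log hx
  refine (integral_le_of_sqrt_mul_le two_pos hx (by positivity)
    (intervalIntegrable_one_div_log one_lt_two (by linarith))
    fun t ht ↦ sqrt_div_log_le ht.1 ht.2).trans_eq ?_
  linear_combination 8 / Real.log x * Real.mul_self_sqrt (by linarith : 0 ≤ x)

theorem Li_eq_div_log_add_integral {x : ℝ} (hx : 2 ≤ x) :
    Li x = x / Real.log x - 2 / Real.log 2 + ∫ t in (2 : ℝ)..x, 1 / Real.log t ^ 2 := by
  have hint := intervalIntegrable_one_div_log one_lt_two (by linarith : 1 < x)
  have hintsq := Chebyshev.intervalIntegrable_one_div_log_sq one_lt_two (by linarith : 1 < x)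
  have hFTC := intervalIntegral.integral_eq_sub_of_hasDerivAt (a := 2) (b := x)
    (f := fun t ↦ t / Real.log t) (f' := fun t ↦ 1 / Real.log t - 1 / Real.log t ^ 2)
    (fun t ht ↦ by
      rw [uIcc_of_le hx] at ht
      have hlog := half_le_log ht.1
      have ht0 : t ≠ 0 := by linarith [ht.1]
      convert! (hasDerivAt_id' t).div (Real.hasDerivAt_log ht0) (by linarith) using 1
      field_simp) (hint.sub hintsq)
  rw [intervalIntegral.integral_sub hint hintsq] at hFTC
  rw [Li]
  linarith

end LogarithmicIntegral

section PrimeNumberTheorem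

open MeasureTheory Set Filter Asymptotics

theorem abs_sub_le_of_monotone_of_abs_integral_le {f : ℝ → ℝ} (hf : Monotone f) {x h E : ℝ}
    (hh : 0 < h) (hE : ∀ t ∈ Icc (x - h) (x + h), |∫ u in (0 : ℝ)..t, (f u - u)| ≤ E) :
    |f x - x| ≤ 2 * E / h + h / 2 := by
  have hint (a b : ℝ) : IntervalIntegrable f volume a b := hf.intervalIntegrable
  have hadd (a b : ℝ) : (∫ u in (0 : ℝ)..b, (f u - u)) - ∫ u in (0 : ℝ)..a, (f u - u) =
      (∫ u in a..b, f u) - (b ^ 2 - a ^ 2) / 2 := by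
    rw [intervalIntegral.integral_interval_sub_left
      ((hint _ _).sub intervalIntegral.intervalIntegrable_id)
      ((hint _ _).sub intervalIntegral.intervalIntegrable_id),
      intervalIntegral.integral_sub (hint _ _) intervalIntegral.intervalIntegrable_id, integral_id]
  have hright : h * f x ≤ ∫ u in x..x + h, f u := by
    have := intervalIntegral.integral_mono_on (by linarith) intervalIntegrable_const
      (hint x (x + h)) fun u hu ↦ hf hu.1
    simpa using this
  have hleft : ∫ u in (x - h)..x, f u ≤ h * f x := by
    have := intervalIntegral.integral_mono_on (by linarith) (hint (x - h) x)
      intervalIntegrable_const fun u hu ↦ hf hu.2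
    simpa using this
  have hx := abs_le.mp (hE x ⟨by linarith, by linarith⟩)
  have hxr := abs_le.mp (hE (x + h) ⟨by linarith, le_rfl⟩)
  have hxl := abs_le.mp (hE (x - h) ⟨le_rfl, by linarith⟩)
  rw [← mul_le_mul_iff_of_pos_left hh, ← abs_of_pos hh, ← abs_mul, abs_of_pos hh,
    show h * (2 * E / h + h / 2) = 2 * E + h ^ 2 / 2 by field_simp, abs_le]
  constructor <;> linarith [hadd x (x + h), hadd (x - h) x]

theorem exists_psi_sub_id_isBigO : ∃ c : ℝ, 0 < c ∧
    (fun x ↦ Chebyshev.psi x - x) =O[atTop] pntError c := by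
  obtain ⟨c, hc, hbigO⟩ := exists_integral_psi_sub_id_isBigO
  obtain ⟨K, hK, hbound⟩ := hbigO.exists_pos
  obtain ⟨X, hX⟩ := eventually_atTop.mp hbound.bound
  refine ⟨c / 4, by positivity, IsBigO.of_bound (8 * K + 1 / 2) ?_⟩
  have hlarge : ∀ᶠ x in atTop, Real.log 2 ≤ c / 4 * √(Real.log x) :=
    ((Real.tendsto_sqrt_atTop.comp Real.tendsto_log_atTop).const_mul_atTop
      (by positivity)).eventually_ge_atTop _
  filter_upwards [hlarge, eventually_ge_atTop (2 * X), eventually_ge_atTop 4] with x hlog hxX hx4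
  have hx : 0 < x := by linarith
  set h := pntError (c / 4) x with hh
  have hh0 : 0 < h := pntError_pos hx
  have hhx : h ≤ x / 2 := by
    rw [hh, pntError, div_eq_mul_inv, neg_mul, Real.exp_neg]
    refine mul_le_mul_of_nonneg_left (inv_anti₀ two_pos ?_) hx.le
    rwa [← Real.log_le_iff_le_exp two_pos]
  have hE : ∀ t ∈ Icc (x - h) (x + h), |∫ u in (0 : ℝ)..t, (Chebyshev.psi u - u)| ≤
      4 * K * h ^ 2 := by
    intro t ht
    have hxt : x / 2 ≤ t := by linarith [ht.1]
    have ht0 : 0 < t := by linarith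
    have hnorm := hX t (by linarith)
    rw [Real.norm_eq_abs, Real.norm_of_nonneg (mul_pos ht0 (pntError_pos ht0)).le] at hnorm
    refine hnorm.trans ?_
    rw [mul_comm 4 K, mul_assoc]
    exact mul_le_mul_of_nonneg_left
      (mul_pntError_le_four_mul_sq hc.le hx4 hxt (by linarith [ht.2])) hK.le
  rw [Real.norm_eq_abs, Real.norm_of_nonneg hh0.le]
  refine (abs_sub_le_of_monotone_of_abs_integral_le Chebyshev.psi_mono hh0 hE).trans_eq ?_
  field_simp
  ring

theorem exists_theta_sub_id_isBigO : ∃ c : ℝ, 0 < c ∧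
    (fun x ↦ Chebyshev.theta x - x) =O[atTop] pntError c := by
  obtain ⟨c, hc, hpsi⟩ := exists_psi_sub_id_isBigO
  have hsqrt : Real.sqrt =O[atTop] pntError c := by
    refine IsBigO.of_bound (Real.exp (c ^ 2 / 2)) ?_
    filter_upwards [eventually_ge_atTop 1] with x hx
    rw [Real.norm_of_nonneg (Real.sqrt_nonneg x),
      Real.norm_of_nonneg (pntError_pos (by linarith)).le]
    exact sqrt_le_mul_pntError hx
  refine ⟨c, hc, (hpsi.sub (Chebyshev.isBigO_psi_sub_theta_sqrt.trans hsqrt)).congr_left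
    fun x ↦ ?_⟩
  simp

theorem exists_abs_theta_sub_id_le : ∃ c C : ℝ, 0 < c ∧ 0 < C ∧ ∀ x : ℝ, 1 ≤ x →
    |Chebyshev.theta x - x| ≤ C * pntError c x := by
  obtain ⟨c, hc, hbigO⟩ := exists_theta_sub_id_isBigO
  obtain ⟨K, hK, hbound⟩ := hbigO.exists_pos
  obtain ⟨X, hX⟩ := eventually_atTop.mp hbound.bound
  have hθX := Chebyshev.theta_nonneg X
  refine ⟨c, K + Real.exp (c ^ 2 / 4) * (Chebyshev.theta X + |X|), hc, by positivity,
    fun x hx ↦ ?_⟩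
  have hpos : 0 < pntError c x := pntError_pos (by linarith)
  rw [add_mul]
  rcases le_total X x with hXx | hxX
  · have := hX x hXx
    rw [Real.norm_eq_abs, Real.norm_of_nonneg hpos.le] at this
    exact this.trans (le_add_of_nonneg_right (by positivity))
  · refine le_add_of_nonneg_of_le (by positivity) ?_
    calc |Chebyshev.theta x - x| ≤ Chebyshev.theta X + |X| := by
          have := Chebyshev.theta_mono hxX
          rw [abs_le]
          constructor <;> linarith [Chebyshev.theta_nonneg x, le_abs_self X]
      _ ≤ Real.exp (c ^ 2 / 4) * pntError c x * (Chebyshev.theta X + |X|) :=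
          le_mul_of_one_le_left (by positivity) (one_le_mul_pntError hx)
      _ = _ := by ring

theorem primePi_eq_primeCounting_floor {x : ℝ} (hx : 0 ≤ x) :
    primePi x = Nat.primeCounting ⌊x⌋₊ := by
  rw [primePi, ← Nat.primesLE_card_eq_primeCounting, ← Set.ncard_coe_finset]
  congr 1
  ext p
  simp only [Set.mem_ofPred_eq, Finset.mem_coe, Nat.mem_primesLE, Nat.le_floor_iff hx, and_comm]

theorem primePi_sub_Li_eq {x : ℝ} (hx : 2 ≤ x) :
    (primePi x : ℝ) - Li x = (Chebyshev.theta x - x) / Real.log x +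
      (∫ t in (2 : ℝ)..x, (Chebyshev.theta t - t) / (t * Real.log t ^ 2)) + 2 / Real.log 2 := by
  have hθ : IntervalIntegrable (fun t ↦ Chebyshev.theta t / (t * Real.log t ^ 2)) volume 2 x :=
    (intervalIntegrable_iff_integrableOn_Icc_of_le hx).mpr
      (Chebyshev.integrableOn_theta_div_id_mul_log_sq x)
  have hlog := Chebyshev.intervalIntegrable_one_div_log_sq one_lt_two (by linarith : 1 < x)
  have hsub : ∫ t in (2 : ℝ)..x, (Chebyshev.theta t - t) / (t * Real.log t ^ 2) =
      (∫ t in (2 : ℝ)..x, Chebyshev.theta t / (t * Real.log t ^ 2)) -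
        ∫ t in (2 : ℝ)..x, 1 / Real.log t ^ 2 := by
    rw [← intervalIntegral.integral_sub hθ hlog]
    refine intervalIntegral.integral_congr fun t ht ↦ ?_
    rw [uIcc_of_le hx] at ht
    have ht0 : t ≠ 0 := by linarith [ht.1]
    simp only [sub_div, div_mul_eq_div_div, div_self ht0]
  rw [primePi_eq_primeCounting_floor (by linarith),
    Chebyshev.primeCounting_eq_theta_div_log_add_integral hx, Li_eq_div_log_add_integral hx, hsub]
  ring

theorem abs_integral_theta_sub_id_div_le {c C x : ℝ} (hc : 0 ≤ c) (hC : 0 ≤ C) (hx : 2 ≤ x)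
    (hθ : ∀ t ∈ Icc 2 x, |Chebyshev.theta t - t| ≤ C * pntError c t) :
    |∫ t in (2 : ℝ)..x, (Chebyshev.theta t - t) / (t * Real.log t ^ 2)| ≤
      8 * C * Real.exp (c ^ 2 / 2) * pntError c x := by
  have hcont : ContinuousOn (fun t ↦ 4 * C * Real.exp (-c * √(Real.log t))) (uIcc 2 x) := by
    rw [uIcc_of_le hx]
    exact continuousOn_const.mul ((continuousOn_exp_neg_mul_sqrt_log c).mono fun t ht ↦
      two_pos.trans_le ht.1)
  rw [← Real.norm_eq_abs]
  refine (intervalIntegral.norm_integral_le_of_norm_le hx (Eventually.of_forall fun t ht ↦ ?_)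
    hcont.intervalIntegrable).trans ?_
  · have ht0 : 0 < t := two_pos.trans ht.1
    have hlog := half_le_log ht.1.le
    have hlog_sq : 1 ≤ 4 * Real.log t ^ 2 := by nlinarith
    rw [norm_div, Real.norm_eq_abs, Real.norm_of_nonneg (by positivity : 0 ≤ t * Real.log t ^ 2),
      div_le_iff₀ (by positivity)]
    calc |Chebyshev.theta t - t| ≤ C * pntError c t := hθ t ⟨ht.1.le, ht.2⟩
      _ ≤ C * pntError c t * (4 * Real.log t ^ 2) :=
          le_mul_of_one_le_right (mul_nonneg hC (pntError_pos ht0).le) hlog_sq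
      _ = _ := by rw [pntError]; ring
  · rw [intervalIntegral.integral_const_mul]
    calc 4 * C * ∫ t in (2 : ℝ)..x, Real.exp (-c * √(Real.log t))
        ≤ 4 * C * (2 * Real.exp (c ^ 2 / 2) * pntError c x) := by
          gcongr
          exact integral_exp_neg_mul_sqrt_log_le hc one_le_two hx
      _ = _ := by ring

theorem exists_abs_primePi_sub_Li_le : ∃ c C : ℝ, 0 < c ∧ 0 < C ∧ ∀ x : ℝ, 2 ≤ x →
    |(primePi x : ℝ) - Li x| ≤ C * pntError c x := by
  obtain ⟨c, C, hc, hC, hθ⟩ := exists_abs_theta_sub_id_le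
  refine ⟨c, 2 * C + 8 * C * Real.exp (c ^ 2 / 2) + 4 * Real.exp (c ^ 2 / 4), hc, by positivity,
    fun x hx ↦ ?_⟩
  have hlog := half_le_log hx
  have hmain : |(Chebyshev.theta x - x) / Real.log x| ≤ 2 * C * pntError c x := by
    rw [abs_div, abs_of_pos (by linarith : 0 < Real.log x), div_le_iff₀ (by linarith)]
    nlinarith [hθ x (by linarith), mul_pos hC (pntError_pos (by linarith : 0 < x) (c := c))]
  have hintegral := abs_integral_theta_sub_id_div_le hc.le hC.le hx
    fun t ht ↦ hθ t (one_le_two.trans ht.1)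
  have hconst : |2 / Real.log 2| ≤ 4 * Real.exp (c ^ 2 / 4) * pntError c x := by
    have hlog_two := half_le_log le_rfl
    rw [abs_of_nonneg (by positivity), div_le_iff₀ (by linarith)]
    nlinarith [one_le_mul_pntError (c := c) (by linarith : 1 ≤ x)]
  rw [primePi_sub_Li_eq hx, add_mul, add_mul]
  exact (abs_add_three _ _ _).trans (add_le_add (add_le_add hmain hintegral) hconst)

end PrimeNumberTheorem

section PrimeSums

open MeasureTheory Set

theorem primePi_mono : Monotone primePi := fun _ y hxy ↦
  ncard_le_ncard (fun _ hp ↦ ⟨hp.1, hp.2.trans hxy⟩)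
    ((finite_Iic ⌊y⌋₊).subset fun _ hp ↦ Nat.le_floor hp.2)

theorem sum_ite_prime_eq_primePi {x : ℝ} (hx : 0 ≤ x) :
    ∑ n ∈ Finset.Icc 0 ⌊x⌋₊, (if n.Prime then (1 : ℝ) else 0) = primePi x := by
  rw [Finset.sum_boole, primePi_eq_primeCounting_floor hx, ← Nat.primesLE_card_eq_primeCounting,
    Nat.primesLE_eq_filter_Icc_zero]

theorem sum_primesLE_eq_sub_integral {f f' : ℝ → ℝ} {y : ℝ} (hy : 2 ≤ y)
    (hf : ∀ t ∈ Icc 2 y, HasDerivAt f (f' t) t) (hf' : ContinuousOn f' (Icc 2 y)) :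
    ∑ p ∈ Nat.primesLE ⌊y⌋₊, f p = f y * primePi y - ∫ t in (2 : ℝ)..y, f' t * primePi t := by
  have hderiv : IntegrableOn (deriv f) (Icc 2 y) :=
    hf'.integrableOn_Icc.congr_fun (fun t ht ↦ (hf t ht).deriv.symm) measurableSet_Icc
  have habel := sum_mul_eq_sub_integral_mul₁ (𝕜 := ℝ) (f := f)
    (fun n : ℕ ↦ if n.Prime then (1 : ℝ) else 0) (if_neg Nat.not_prime_zero)
    (if_neg Nat.not_prime_one) y
    (fun t ht ↦ (hf t ht).differentiableAt) hderiv
  rw [sum_ite_prime_eq_primePi (by linarith)] at habel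
  have hint : ∫ t in Ioc 2 y, deriv f t *
      ∑ n ∈ Finset.Icc 0 ⌊t⌋₊, (if n.Prime then (1 : ℝ) else 0) =
        ∫ t in (2 : ℝ)..y, f' t * primePi t := by
    rw [intervalIntegral.integral_of_le hy]
    refine setIntegral_congr_fun measurableSet_Ioc fun t ht ↦ ?_
    simp only [(hf t ⟨ht.1.le, ht.2⟩).deriv, sum_ite_prime_eq_primePi (two_pos.trans ht.1).le]
  rw [hint] at habel
  simpa only [mul_ite, mul_one, mul_zero, ← Finset.sum_filter,
    ← Nat.primesLE_eq_filter_Icc_zero] using habel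

theorem integral_div_log_eq_sub_integral {f f' : ℝ → ℝ} {y : ℝ} (hy : 2 ≤ y)
    (hf : ∀ t ∈ Icc 2 y, HasDerivAt f (f' t) t) (hf' : ContinuousOn f' (Icc 2 y)) :
    ∫ t in (2 : ℝ)..y, f t / Real.log t = f y * Li y - ∫ t in (2 : ℝ)..y, f' t * Li t := by
  rw [← uIcc_of_le hy] at hf hf'
  have hparts := intervalIntegral.integral_mul_deriv_eq_deriv_mul hf
    (fun t ht ↦ hasDerivAt_Li (by rw [uIcc_of_le hy] at ht; linarith [ht.1]))
    hf'.intervalIntegrable (intervalIntegrable_one_div_log one_lt_two (by linarith))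
  simpa only [Li_two, mul_one_div, mul_zero, sub_zero] using hparts

theorem abs_integral_mul_le_of_deriv_nonneg {f f' g : ℝ → ℝ} {a b G : ℝ} (hab : a ≤ b)
    (hf : ∀ t ∈ Icc a b, HasDerivAt f (f' t) t) (hf' : ContinuousOn f' (Icc a b))
    (hf'_nonneg : ∀ t ∈ Icc a b, 0 ≤ f' t) (hg : ∀ t ∈ Icc a b, |g t| ≤ G) :
    |∫ t in a..b, f' t * g t| ≤ G * (f b - f a) := by
  rw [← uIcc_of_le hab] at hf hf'
  rw [← Real.norm_eq_abs, ← intervalIntegral.integral_eq_sub_of_hasDerivAt hf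
    hf'.intervalIntegrable, ← intervalIntegral.integral_const_mul]
  refine intervalIntegral.norm_integral_le_of_norm_le hab
    (Filter.Eventually.of_forall fun t ht ↦ ?_) (hf'.intervalIntegrable.const_mul G)
  have htmem : t ∈ Icc a b := Ioc_subset_Icc_self ht
  rw [Real.norm_eq_abs, abs_mul, abs_of_nonneg (hf'_nonneg t htmem), mul_comm]
  exact mul_le_mul_of_nonneg_right (hg t htmem) (hf'_nonneg t htmem)

theorem abs_sum_primesLE_sub_integral_div_log_le {f f' : ℝ → ℝ} {y G : ℝ} (hy : 2 ≤ y)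
    (hf : ∀ t ∈ Icc 2 y, HasDerivAt f (f' t) t) (hf' : ContinuousOn f' (Icc 2 y))
    (hf'_nonneg : ∀ t ∈ Icc 2 y, 0 ≤ f' t) (hf_two : 0 ≤ f 2)
    (hG : ∀ t ∈ Icc 2 y, |(primePi t : ℝ) - Li t| ≤ G) :
    |∑ p ∈ Nat.primesLE ⌊y⌋₊, f p - ∫ t in (2 : ℝ)..y, f t / Real.log t| ≤ 2 * G * f y := by
  have hpi : IntervalIntegrable (fun t ↦ f' t * primePi t) volume 2 y :=
    (Nat.mono_cast.comp primePi_mono).intervalIntegrable.continuousOn_mul (by rwa [uIcc_of_le hy])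
  have hLi : IntervalIntegrable (fun t ↦ f' t * Li t) volume 2 y := by
    refine ContinuousOn.intervalIntegrable ?_
    rw [uIcc_of_le hy]
    exact hf'.mul fun t ht ↦
      (hasDerivAt_Li (by linarith [ht.1])).continuousAt.continuousWithinAt
  have hdecomp : ∑ p ∈ Nat.primesLE ⌊y⌋₊, f p - ∫ t in (2 : ℝ)..y, f t / Real.log t =
      f y * (primePi y - Li y) - ∫ t in (2 : ℝ)..y, f' t * (primePi t - Li t) := by
    simp only [sum_primesLE_eq_sub_integral hy hf hf', integral_div_log_eq_sub_integral hy hf hf',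
      mul_sub, intervalIntegral.integral_sub hpi hLi]
    ring
  have hintegral := abs_integral_mul_le_of_deriv_nonneg hy hf hf' hf'_nonneg hG
  have hfy : f 2 ≤ f y := by
    have hmono := monotoneOn_of_deriv_nonneg (convex_Icc 2 y)
      (fun t ht ↦ (hf t ht).continuousAt.continuousWithinAt)
      (fun t ht ↦ (hf t (interior_subset ht)).differentiableAt.differentiableWithinAt)
      fun t ht ↦ (hf t (interior_subset ht)).deriv ▸ hf'_nonneg t (interior_subset ht)
    exact hmono (left_mem_Icc.mpr hy) (right_mem_Icc.mpr hy) hy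
  have hboundary : |f y * (primePi y - Li y)| ≤ f y * G := by
    rw [abs_mul, abs_of_nonneg (hf_two.trans hfy)]
    exact mul_le_mul_of_nonneg_left (hG y (right_mem_Icc.mpr hy)) (hf_two.trans hfy)
  have hGf : 0 ≤ G * f 2 :=
    mul_nonneg ((abs_nonneg _).trans (hG 2 (left_mem_Icc.mpr hy))) hf_two
  rw [hdecomp]
  linarith [abs_sub (f y * (primePi y - Li y)) (∫ t in (2 : ℝ)..y, f' t * (primePi t - Li t))]

theorem abs_sum_primesLE_floor_le {f : ℕ → ℝ} {y G : ℝ} (hy : 0 ≤ y) (hG : 0 ≤ G)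
    (hf : ∀ p ∈ Nat.primesLE ⌊y⌋₊, |f p| ≤ G) : |∑ p ∈ Nat.primesLE ⌊y⌋₊, f p| ≤ y * G := by
  have hcard : ((Nat.primesLE ⌊y⌋₊).card : ℝ) ≤ y := by
    refine le_trans ?_ (Nat.floor_le hy)
    rw [Nat.primesLE_eq_filter_Icc_one]
    exact_mod_cast (Finset.card_filter_le _ _).trans_eq (by simp)
  calc |∑ p ∈ Nat.primesLE ⌊y⌋₊, f p| ≤ ∑ p ∈ Nat.primesLE ⌊y⌋₊, |f p| :=
        Finset.abs_sum_le_sum_abs _ _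
    _ ≤ (Nat.primesLE ⌊y⌋₊).card • G := Finset.sum_le_card_nsmul _ _ _ hf
    _ ≤ y * G := by rw [nsmul_eq_mul]; gcongr

end PrimeSums

section PrimePiSums

open Set

theorem exists_forall_abs_primePi_sub_Li_le : ∃ c C : ℝ, 0 < c ∧ 0 < C ∧ ∀ t x : ℝ, 2 ≤ t →
    t ≤ x → |(primePi t : ℝ) - Li t| ≤ C * pntError c x := by
  obtain ⟨c, C, hc, hC, hpi⟩ := exists_abs_primePi_sub_Li_le
  refine ⟨c, C * Real.exp (c ^ 2 / 2), hc, by positivity, fun t x ht htx ↦ (hpi t ht).trans ?_⟩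
  rw [mul_assoc]
  exact mul_le_mul_of_nonneg_left (pntError_le_mul_pntError hc.le (by linarith) htx) hC.le

variable {c r y : ℝ}

theorem abs_sum_Li_mul_sub_integral_le {G : ℝ} (hr : 1 ≤ r) (hy : 2 ≤ y)
    (hG : ∀ t ∈ Icc 2 y, |(primePi t : ℝ) - Li t| ≤ G) :
    |∑ p ∈ Nat.primesLE ⌊y⌋₊, Li (r * p) - ∫ u in (2 : ℝ)..y, Li (r * u) / Real.log u| ≤
      2 * G * Li (r * y) := by
  have hmul {t : ℝ} (ht : 2 ≤ t) : 2 ≤ r * t := by nlinarith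
  have hlog {t : ℝ} (ht : t ∈ Icc 2 y) : 0 < Real.log (r * t) :=
    Real.log_pos (by linarith [hmul ht.1])
  refine abs_sum_primesLE_sub_integral_div_log_le (f := fun u ↦ Li (r * u))
    (f' := fun u ↦ r / Real.log (r * u)) hy (fun t ht ↦ ?_)
    (continuousOn_const.div (ContinuousOn.log (by fun_prop) fun t ht ↦ ?_) fun t ht ↦ (hlog ht).ne')
    (fun t ht ↦ div_nonneg (by linarith) (hlog ht).le) (Li_nonneg (hmul le_rfl)) hG
  · convert! (hasDerivAt_Li (by linarith [hmul ht.1])).comp t ((hasDerivAt_id' t).const_mul r)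
      using 1
    ring
  · linarith [hmul ht.1]

theorem log_mul_sq_le_two_mul_log_mul (hr : 1 ≤ r) (hy : 0 < y) :
    Real.log (r * y ^ 2) ≤ 2 * Real.log (r * y) := by
  rw [Real.log_mul (by linarith) (by positivity), Real.log_mul (by linarith) hy.ne', Real.log_pow]
  push_cast
  linarith [Real.log_nonneg hr]

theorem mul_pntError_mul_le (hc : 0 < c) (hr : 1 ≤ r) (hy : 2 ≤ y) :
    y * pntError c (r * y) ≤ 32 / c ^ 2 *
      (r * y ^ 2 / Real.log (r * y ^ 2) * Real.exp (-(c / 4) * √(Real.log (y ^ 2)))) := by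
  have hy2 : 1 < y ^ 2 := by nlinarith
  have hyx : y ^ 2 ≤ r * y ^ 2 := le_mul_of_one_le_left (by positivity) hr
  have hlogx : 0 < Real.log (r * y ^ 2) := Real.log_pos (hy2.trans_le hyx)
  set w := √(Real.log (r * y ^ 2))
  have hw : w / 2 ≤ √(Real.log (r * y)) := by
    refine Real.le_sqrt_of_sq_le ?_
    rw [div_pow, Real.sq_sqrt hlogx.le]
    linarith [log_mul_sq_le_two_mul_log_mul hr (by linarith : 0 < y)]
  have hdecay : Real.log (r * y ^ 2) * Real.exp (-(c / 2) * w) ≤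
      32 / c ^ 2 * Real.exp (-(c / 4) * w) := by
    have := sq_mul_exp_neg_le (half_pos hc) (Real.sqrt_nonneg (Real.log (r * y ^ 2)))
    rw [Real.sq_sqrt hlogx.le] at this
    rwa [show 32 / c ^ 2 = 8 / (c / 2) ^ 2 by ring, show c / 4 = c / 2 / 2 by ring, neg_mul]
  have hexp : Real.exp (-c * √(Real.log (r * y))) ≤
      32 / c ^ 2 * Real.exp (-(c / 4) * √(Real.log (y ^ 2))) / Real.log (r * y ^ 2) := by
    rw [le_div_iff₀' hlogx]
    calc Real.log (r * y ^ 2) * Real.exp (-c * √(Real.log (r * y)))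
        ≤ Real.log (r * y ^ 2) * Real.exp (-(c / 2) * w) := by gcongr _ * Real.exp ?_; nlinarith
      _ ≤ 32 / c ^ 2 * Real.exp (-(c / 4) * w) := hdecay
      _ ≤ 32 / c ^ 2 * Real.exp (-(c / 4) * √(Real.log (y ^ 2))) := by
          gcongr _ * Real.exp ?_
          have : √(Real.log (y ^ 2)) ≤ w := Real.sqrt_le_sqrt (Real.log_le_log (by linarith) hyx)
          nlinarith
  calc y * pntError c (r * y) = r * y ^ 2 * Real.exp (-c * √(Real.log (r * y))) := by
        rw [pntError]; ring
    _ ≤ r * y ^ 2 *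
          (32 / c ^ 2 * Real.exp (-(c / 4) * √(Real.log (y ^ 2))) / Real.log (r * y ^ 2)) := by
        gcongr
    _ = _ := by ring

theorem pntError_mul_Li_mul_le (hc : 0 ≤ c) (hr : 1 ≤ r) (hy : 2 ≤ y) :
    pntError c y * Li (r * y) ≤ 16 *
      (r * y ^ 2 / Real.log (r * y ^ 2) * Real.exp (-(c / 4) * √(Real.log (y ^ 2)))) := by
  have hry : 2 ≤ r * y := by nlinarith
  have hlogx : 0 < Real.log (r * y ^ 2) := Real.log_pos (by nlinarith)
  have hexp : Real.exp (-c * √(Real.log y)) ≤ Real.exp (-(c / 4) * √(Real.log (y ^ 2))) := by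
    have hsqrt : √(Real.log (y ^ 2)) ≤ 4 * √(Real.log y) := by
      rw [Real.log_pow, Real.sqrt_mul (by positivity)]
      gcongr
      rw [Real.sqrt_le_left (by norm_num)]
      norm_num
    rw [Real.exp_le_exp]
    nlinarith
  have hLi : Li (r * y) ≤ 16 * (r * y / Real.log (r * y ^ 2)) := by
    have hlog := log_mul_sq_le_two_mul_log_mul hr (by linarith : 0 < y)
    calc Li (r * y) ≤ 8 * (r * y / Real.log (r * y)) := Li_le hry
      _ ≤ 8 * (r * y / (Real.log (r * y ^ 2) / 2)) := by gcongr; linarith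
      _ = _ := by ring
  calc pntError c y * Li (r * y)
      ≤ y * Real.exp (-(c / 4) * √(Real.log (y ^ 2))) *
          (16 * (r * y / Real.log (r * y ^ 2))) := by
        rw [pntError]
        gcongr
        exact Li_nonneg hry
    _ = _ := by ring

theorem abs_sum_primePi_mul_sub_sum_Li_mul_le {G : ℝ} (hr : 1 ≤ r) (hy : 2 ≤ y)
    (hG : ∀ t ∈ Icc 2 (r * y), |(primePi t : ℝ) - Li t| ≤ G) :
    |∑ p ∈ Nat.primesLE ⌊y⌋₊, (primePi (r * p) : ℝ) - ∑ p ∈ Nat.primesLE ⌊y⌋₊, Li (r * p)| ≤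
      y * G := by
  rw [← Finset.sum_sub_distrib]
  refine abs_sum_primesLE_floor_le (by linarith)
    ((abs_nonneg _).trans (hG 2 ⟨le_rfl, by nlinarith⟩)) fun p hp ↦ hG _ ⟨?_, ?_⟩
  · have : (2 : ℝ) ≤ p := by exact_mod_cast Nat.two_le_of_mem_primesLE hp
    nlinarith
  · have : (p : ℝ) ≤ y := (Nat.le_floor_iff (by linarith)).mp (Nat.le_of_mem_primesLE hp)
    gcongr

end PrimePiSums

theorem stmt_17 :
    ∃ c C : ℝ, 0 < c ∧ 0 < C ∧ ∀ x r : ℝ, 1 ≤ r → r ≤ x / 4 →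
      |(∑ p ∈ (Finset.range (⌊Real.sqrt (x / r)⌋₊ + 1)).filter
            (fun p : ℕ => p.Prime ∧ (p : ℝ) ≤ Real.sqrt (x / r)),
          (primePi (r * p) : ℝ))
        - ∫ u in (2 : ℝ)..Real.sqrt (x / r), Li (r * u) / Real.log u| ≤
        C * (x / Real.log x * Real.exp (-c * Real.sqrt (Real.log (x / r)))) := by
  obtain ⟨c, C, hc, hC, hpi⟩ := exists_forall_abs_primePi_sub_Li_le
  refine ⟨c / 4, C * (32 / c ^ 2) + 32 * C, by positivity, by positivity, fun x r hr hrx ↦ ?_⟩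
  set y := √(x / r)
  have hy : 2 ≤ y := Real.le_sqrt_of_sq_le (by rw [le_div_iff₀ (by linarith)]; linarith)
  have hxr : x / r = y ^ 2 := (Real.sq_sqrt (div_nonneg (by linarith) (by linarith))).symm
  have hx : x = r * y ^ 2 := by rw [← hxr, mul_div_cancel₀ _ (by linarith)]
  have hprimes : (Finset.range (⌊y⌋₊ + 1)).filter (fun p : ℕ ↦ p.Prime ∧ (p : ℝ) ≤ y) =
      Nat.primesLE ⌊y⌋₊ := by
    ext p
    simp only [Finset.mem_filter, Finset.mem_range, Nat.lt_add_one_iff, Nat.mem_primesLE,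
      ← Nat.le_floor_iff (by linarith : 0 ≤ y)]
    tauto
  rw [hprimes, hxr, hx]
  have hLi := abs_sum_primePi_mul_sub_sum_Li_mul_le hr hy fun t ht ↦ hpi t _ ht.1 ht.2
  have hsum := abs_sum_Li_mul_sub_integral_le hr hy fun t ht ↦ hpi t _ ht.1 ht.2
  refine (abs_sub_le _ _ _).trans ((add_le_add hLi hsum).trans ?_)
  linarith [mul_le_mul_of_nonneg_left (mul_pntError_mul_le hc hr hy) hC.le,
    mul_le_mul_of_nonneg_left (pntError_mul_Li_mul_le hc.le hr hy) hC.le]
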